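/- arXiv:1409.4379 — 12 statements merged into one kernel-verified Lean document; each statement's English description precedes it below -/
import Mathlib

section
/- Let N ≥ 3 be an integer. There exists a finite family of univariate real polynomials h_1, …, h_m, each of degree at most ⌈N/4⌉, such that for every i ∈ {1, …, N}, cos(π/N) − cos(θ_i) = Σ_{j=1}^m h_j(cos θ_i)², where θ_i = (2i−1)π/N. (That is, the facet-defining linear function ℓ(x,y) = cos(π/N) − x of the regular N-gon agrees with a sum of squares of polynomials of degree at most ⌈N/4⌉ on the vertices of the regular N-gon.) -/
open Real Polynomial

/-!
Put `α = π/(2N)`, `n = ⌈N/4⌉` and `m = 4n - N`. Since `m + N` is even, `X ^ m * T_N` is a polynomial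
`F` in `T_2 = 2X² - 1`, so that `F(cos 2x) = cos^m x cos Nx`; it vanishes at every vertex abscissa,
has degree `2n`, and its roots are real and lie in `[-1, cos 2α]`, with `cos 2α = cos (π/N)` among
them. On the vertices `ℓ` therefore agrees with `cos 2α - t + F(t) / F'(cos 2α)`, which is
nonnegative on the whole line, hence a sum of squares of polynomials of degree at most `n`:

* for `t ≥ cos 2α`, the real-rooted `F` lies above its tangent at its largest root;
* for `t ≤ -1`, all `2n` linear factors of `F` are nonpositive;
* for `t = cos 2x` in between, `|cos Nx| = |sin N(x-α)| ≤ N sin (x-α)`, whereas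
  `cos 2α - t = 2 sin (x+α) sin (x-α) ≥ 2 sin 2α sin (x-α)`.
-/

/-! ### Nonnegative univariate polynomials are sums of squares -/

lemma X_sub_C_sq_dvd_of_isRoot_of_isRoot_derivative {R : Type*} [CommRing R] {p : R[X]} {a : R}
    (hp : p.IsRoot a) (hp' : p.derivative.IsRoot a) : (X - C a) ^ 2 ∣ p := by
  obtain ⟨s, rfl⟩ := dvd_iff_isRoot.mpr hp
  have hs : s.IsRoot a := by simpa using hp'
  rw [sq]
  exact mul_dvd_mul_left _ (dvd_iff_isRoot.mpr hs)

lemma eval_nonneg_of_forall_ne {q : ℝ[X]} {a : ℝ} (hq : ∀ y ≠ a, 0 ≤ q.eval y) (y : ℝ) :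
    0 ≤ q.eval y := by
  have hclosed : IsClosed {y : ℝ | 0 ≤ q.eval y} := isClosed_le continuous_const q.continuous
  have hdense : Dense {y : ℝ | 0 ≤ q.eval y} := (dense_compl_singleton a).mono hq
  exact hclosed.closure_subset (hdense y)

lemma exists_eq_C_add_sq_mul_of_forall_eval_le {p : ℝ[X]} {a : ℝ}
    (ha : ∀ y, p.eval a ≤ p.eval y) :
    ∃ q : ℝ[X], p = C (p.eval a) + (X - C a) ^ 2 * q ∧ ∀ y, 0 ≤ q.eval y := by
  have hderiv : p.derivative.eval a = 0 := by
    have hmin : IsLocalMin (fun y => p.eval y) a := Filter.Eventually.of_forall ha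
    simpa using hmin.deriv_eq_zero
  obtain ⟨q, hq⟩ : (X - C a) ^ 2 ∣ p - C (p.eval a) :=
    X_sub_C_sq_dvd_of_isRoot_of_isRoot_derivative (by simp) (by simpa using hderiv)
  refine ⟨q, by rw [← hq]; ring, eval_nonneg_of_forall_ne (a := a) fun y hy => ?_⟩
  have hmul : 0 ≤ (y - a) ^ 2 * q.eval y := by
    have hval : p.eval y - p.eval a = (y - a) ^ 2 * q.eval y := by
      simpa using congrArg (eval y) hq
    exact hval ▸ sub_nonneg.mpr (ha y)
  exact nonneg_of_mul_nonneg_right hmul (sq_pos_of_ne_zero (sub_ne_zero.mpr hy))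

lemma natDegree_C_add_X_sub_C_sq_mul {R : Type*} [CommRing R] {q : R[X]} (hq : q ≠ 0) (a c : R) :
    (C c + (X - C a) ^ 2 * q).natDegree = q.natDegree + 2 := by
  have := Nontrivial.of_polynomial_ne hq
  rw [natDegree_C_add, ((monic_X_sub_C a).pow 2).natDegree_mul' hq,
    (monic_X_sub_C a).natDegree_pow, natDegree_X_sub_C]
  ring

theorem exists_sum_sq_of_eval_nonneg {n : ℕ} {p : ℝ[X]} (hdeg : p.natDegree ≤ 2 * n)
    (hp : ∀ x, 0 ≤ p.eval x) :
    ∃ (m : ℕ) (h : Fin m → ℝ[X]), (∀ j, (h j).natDegree ≤ n) ∧ p = ∑ j, h j ^ 2 := by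
  induction n generalizing p with
  | zero =>
    obtain ⟨c, rfl⟩ := natDegree_eq_zero.mp (Nat.le_zero.mp hdeg)
    have hc : 0 ≤ c := by simpa using hp 0
    exact ⟨1, fun _ => C √c, by simp, by simp [← C_pow, sq_sqrt hc]⟩
  | succ n ih =>
    obtain ⟨a, ha⟩ := p.exists_forall_norm_le
    have hmin : ∀ y, p.eval a ≤ p.eval y := fun y => by
      simpa [abs_of_nonneg (hp _)] using ha y
    obtain ⟨q, hpq, hq⟩ := exists_eq_C_add_sq_mul_of_forall_eval_le hmin
    have hqdeg : q.natDegree ≤ 2 * n := by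
      rcases eq_or_ne q 0 with rfl | hq0
      · simp
      · have := natDegree_C_add_X_sub_C_sq_mul hq0 a (p.eval a)
        rw [← hpq] at this
        omega
    obtain ⟨m, h, hh, hsum⟩ := ih hqdeg hq
    refine ⟨m + 1, Fin.cons (C √(p.eval a)) fun j => (X - C a) * h j, ?_, ?_⟩
    · refine Fin.cases (by simp) fun j => ?_
      calc ((X - C a) * h j).natDegree ≤ (X - C a).natDegree + (h j).natDegree := natDegree_mul_le
        _ ≤ n + 1 := by rw [natDegree_X_sub_C, add_comm]; gcongr; exact hh j
    · simp only [Fin.sum_univ_succ, Fin.cons_zero, Fin.cons_succ, mul_pow, ← Finset.mul_sum,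
        ← hsum, ← C_pow, sq_sqrt (hp a)]
      exact hpq

/-! ### Real-rooted polynomials -/

section SplitsComp

variable {K : Type*} [Field K] {f g : K[X]}

lemma exists_isRoot_comp_of_isRoot_map {L : Type*} [Field L] [IsAlgClosed L] {i : K →+* L}
    (hfg : (f.comp g).Splits) (hf : f ≠ 0) (hg : g.natDegree ≠ 0) {z : L}
    (hz : (f.map i).IsRoot z) : ∃ w, (f.comp g).IsRoot w ∧ i (g.eval w) = z := by
  obtain ⟨y, rfl⟩ := IsAlgClosed.eval_surjective (p := g.map i) (by rwa [natDegree_map]) z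
  have hy : ((f.comp g).map i).IsRoot y := by rwa [map_comp, IsRoot, eval_comp]
  have hfg0 : f.comp g ≠ 0 := fun h => by
    obtain rfl | ⟨-, hgC⟩ := comp_eq_zero_iff.mp h
    · exact hf rfl
    · exact hg (hgC ▸ natDegree_C _)
  obtain ⟨w, rfl⟩ := hfg.mem_range_of_isRoot hfg0 hy
  exact ⟨w, hy.of_map i.injective, (eval_map_apply ..).symm⟩

lemma splits_of_splits_comp (hfg : (f.comp g).Splits) (hg : g.natDegree ≠ 0) : f.Splits := by
  rcases eq_or_ne f 0 with rfl | hf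
  · exact Splits.zero
  · refine Splits.of_splits_map (algebraMap K (AlgebraicClosure K)) (IsAlgClosed.splits _)
      fun z hz => ?_
    obtain ⟨w, -, hw⟩ := exists_isRoot_comp_of_isRoot_map hfg hf hg (isRoot_of_mem_roots hz)
    exact ⟨g.eval w, hw⟩

lemma exists_isRoot_comp_of_isRoot (hfg : (f.comp g).Splits) (hf : f ≠ 0) (hg : g.natDegree ≠ 0)
    {z : K} (hz : f.IsRoot z) : ∃ w, (f.comp g).IsRoot w ∧ g.eval w = z := by
  obtain ⟨w, hw, hwz⟩ := exists_isRoot_comp_of_isRoot_map hfg hf hg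
    (hz.map (f := algebraMap K (AlgebraicClosure K)))
  exact ⟨w, hw, (algebraMap K (AlgebraicClosure K)).injective hwz⟩

end SplitsComp

section SplitsOrdered

variable {K : Type*} [Field K] [LinearOrder K] [IsStrictOrderedRing K] {f : K[X]}

lemma eval_nonneg_of_splits_of_even_natDegree (hf : f.Splits) (hlc : 0 ≤ f.leadingCoeff)
    (heven : Even f.natDegree) {t : K} (ht : ∀ r, f.IsRoot r → t ≤ r) : 0 ≤ f.eval t := by
  have hprod : (f.roots.map (t - ·)).prod = (f.roots.map (· - t)).prod := by
    rw [← one_mul (f.roots.map (· - t)).prod, ← heven.neg_one_pow, hf.natDegree_eq_card_roots,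
      ← Multiset.card_map (· - t), ← Multiset.prod_map_neg, Multiset.map_map]
    simp
  rw [hf.eval_eq_prod_roots, hprod]
  exact mul_nonneg hlc <| Multiset.prod_map_nonneg fun r hr =>
    sub_nonneg.mpr (ht r (isRoot_of_mem_roots hr))

lemma eval_le_eval_of_splits (hf : f.Splits) (hlc : 0 ≤ f.leadingCoeff) {a t : K}
    (ha : ∀ r, f.IsRoot r → r ≤ a) (hat : a ≤ t) : f.eval a ≤ f.eval t := by
  rw [hf.eval_eq_prod_roots, hf.eval_eq_prod_roots]
  refine mul_le_mul_of_nonneg_left (Multiset.prod_map_le_prod_map₀ _ _ (fun r hr => ?_)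
    fun r _ => sub_le_sub_right hat r) hlc
  exact sub_nonneg.mpr (ha r (isRoot_of_mem_roots hr))

lemma tangent_le_eval_of_splits (hf : f.Splits) (hlc : 0 ≤ f.leadingCoeff) {a t : K}
    (hfa : f.IsRoot a) (ha : ∀ r, f.IsRoot r → r ≤ a) (hat : a ≤ t) :
    f.derivative.eval a * (t - a) ≤ f.eval t := by
  obtain ⟨g, rfl⟩ := dvd_iff_isRoot.mpr hfa
  have hmono : g.eval a ≤ g.eval t :=
    eval_le_eval_of_splits (splits_X_sub_C_mul_iff.mp hf) (by simpa using hlc)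
      (fun r hr => ha r (hr.dvd (dvd_mul_left _ _))) hat
  simpa [mul_comm] using mul_le_mul_of_nonneg_left hmono (sub_nonneg.mpr hat)

end SplitsOrdered

/-! ### Trigonometric inequalities -/

lemma abs_sin_nat_mul_le (n : ℕ) (x : ℝ) : |sin (n * x)| ≤ n * |sin x| := by
  induction n with
  | zero => simp
  | succ n ih =>
    calc |sin ((n + 1 : ℕ) * x)| = |sin (n * x) * cos x + cos (n * x) * sin x| := by
          rw [← sin_add]; push_cast; ring_nf
      _ ≤ |sin (n * x)| * |cos x| + |cos (n * x)| * |sin x| := by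
          simpa only [abs_mul] using abs_add_le (sin (n * x) * cos x) (cos (n * x) * sin x)
      _ ≤ n * |sin x| * 1 + 1 * |sin x| := by
          gcongr <;> exact abs_cos_le_one _
      _ = (n + 1 : ℕ) * |sin x| := by push_cast; ring

lemma abs_cos_le_cos {a x : ℝ} (ha : 0 ≤ a) (hax : a ≤ x) (hxa : x ≤ π - a) : |cos x| ≤ cos a := by
  refine abs_le'.mpr ⟨cos_le_cos_of_nonneg_of_le_pi ha (by linarith) hax, ?_⟩
  rw [← cos_pi_sub]
  exact cos_le_cos_of_nonneg_of_le_pi ha (by linarith) (by linarith)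

lemma sin_le_sin_of_le_of_le_pi_sub {a x : ℝ} (ha : 0 ≤ a) (hax : a ≤ x) (hxa : x ≤ π - a) :
    sin a ≤ sin x := by
  rw [← cos_pi_div_two_sub, ← cos_pi_div_two_sub, ← cos_abs (π / 2 - x)]
  exact cos_le_cos_of_nonneg_of_le_pi (abs_nonneg _) (by linarith)
    (abs_le.mpr ⟨by linarith, by linarith⟩)

lemma exists_cos_two_mul_eq {a t : ℝ} (ha0 : 0 ≤ a) (ha : a ≤ π / 2) (ht : -1 ≤ t)
    (hta : t ≤ cos (2 * a)) : ∃ x, a ≤ x ∧ x ≤ π / 2 ∧ cos (2 * x) = t := by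
  refine ⟨arccos t / 2, ?_, by linarith [arccos_le_pi t], ?_⟩
  · have harccos := arccos_le_arccos hta
    rw [arccos_cos (by linarith) (by linarith)] at harccos
    linarith
  · rw [mul_div_cancel₀ _ two_ne_zero, cos_arccos ht (hta.trans (cos_le_one _))]

/-! ### Chebyshev polynomials in the doubled angle -/

lemma exists_comp_T_two_eq_X_pow_mul_T {K : Type*} [Field K] [NeZero (2 : K)] (m : ℕ) (n : ℤ)
    (h : Even (m + n)) : ∃ F : K[X], F.comp (Chebyshev.T K 2) = X ^ m * Chebyshev.T K n := by
  induction m generalizing n with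
  | zero =>
    obtain ⟨d, rfl⟩ : 2 ∣ n := even_iff_two_dvd.mp (by simpa using h)
    exact ⟨Chebyshev.T K d, by rw [mul_comm 2, Chebyshev.T_mul, pow_zero, one_mul]⟩
  | succ m ih =>
    obtain ⟨F, hF⟩ := ih (n + 1) (by grind)
    obtain ⟨G, hG⟩ := ih (n - 1) (by grind)
    have htwo : (C 2⁻¹ * 2 : K[X]) = 1 := by
      rw [← C_ofNat, ← C_mul, inv_mul_cancel₀ two_ne_zero, C_1]
    refine ⟨C 2⁻¹ * (F + G), ?_⟩
    simp only [mul_comp, C_comp, add_comp, hF, hG, Chebyshev.T_add_one]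
    linear_combination X ^ (m + 1) * Chebyshev.T K n * htwo

lemma splits_T_real (n : ℕ) : (Chebyshev.T ℝ n).Splits := by
  rw [splits_iff_card_roots, Chebyshev.roots_T_real, Finset.card_val, Chebyshev.natDegree_T,
    Int.natAbs_natCast, Finset.card_image_of_injOn, Finset.card_range]
  exact (Finset.range n).nodup_map_iff_injOn.mp (Chebyshev.roots_T_real_nodup n)

lemma abs_le_cos_of_isRoot_T_real {n : ℕ} {α w : ℝ} (hα : n * α = π / 2)
    (hw : (Chebyshev.T ℝ n).IsRoot w) : |w| ≤ cos α := by
  have hn : (0 : ℝ) < n := by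
    rcases n.eq_zero_or_pos with rfl | hn
    · simp at hw
    · exact_mod_cast hn
  have hα0 : 0 ≤ α := by
    refine nonneg_of_mul_nonneg_right ?_ hn
    rw [hα]; positivity
  obtain ⟨k, hk, rfl⟩ : ∃ k < n, cos ((2 * k + 1) * π / (2 * n)) = w := by
    simpa [Chebyshev.roots_T_real] using (mem_roots (Chebyshev.T_ne_zero ℝ n)).mpr hw
  have hangle : (2 * k + 1) * π / (2 * n) = (2 * k + 1) * α := by
    rw [div_eq_iff (by positivity)]
    linear_combination -2 * (2 * (k : ℝ) + 1) * hα
  have hkn : (k : ℝ) + 1 ≤ n := by exact_mod_cast hk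
  rw [hangle]
  refine abs_cos_le_cos hα0 ?_ ?_ <;> nlinarith [mul_nonneg k.cast_nonneg hα0]

/-- `F` is the form of `X ^ m * T_N` in the variable `T_2`, that is `F(cos 2x) = cos^m x cos Nx`.
Its roots are the abscissae of the vertices of the regular `N`-gon and possibly `-1`; the factor
`X ^ m` serves to choose the degree `(m + N) / 2`. -/
def IsVertexPolynomial (F : ℝ[X]) (m N : ℕ) : Prop :=
  F.comp (Chebyshev.T ℝ 2) = X ^ m * Chebyshev.T ℝ N

namespace IsVertexPolynomial

variable {F : ℝ[X]} {m N : ℕ} {α : ℝ}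

lemma eval_cos_two_mul (hF : IsVertexPolynomial F m N) (x : ℝ) :
    F.eval (cos (2 * x)) = cos x ^ m * cos (N * x) := by
  simpa using congrArg (eval (cos x)) hF

lemma two_mul_natDegree (hF : IsVertexPolynomial F m N) : 2 * F.natDegree = m + N := by
  have hdeg := congrArg natDegree hF
  rw [natDegree_comp, (monic_X_pow m).natDegree_mul' (Chebyshev.T_ne_zero ℝ N)] at hdeg
  simpa [mul_comm] using hdeg

lemma leadingCoeff_pos (hF : IsVertexPolynomial F m N) : 0 < F.leadingCoeff := by
  have hlc : F.leadingCoeff * 2 ^ F.natDegree = 2 ^ (N - 1) := by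
    simpa [leadingCoeff_comp] using congrArg leadingCoeff hF
  refine pos_of_mul_pos_left (b := 2 ^ F.natDegree) ?_ (by positivity)
  rw [hlc]; positivity

lemma splits_comp (hF : IsVertexPolynomial F m N) : (F.comp (Chebyshev.T ℝ 2)).Splits := by
  rw [hF]
  exact (Splits.X_pow m).mul (splits_T_real N)

lemma splits (hF : IsVertexPolynomial F m N) : F.Splits :=
  splits_of_splits_comp hF.splits_comp (by simp)

lemma isRoot_cos_two_mul (hF : IsVertexPolynomial F m N) {x : ℝ} (hx : cos (N * x) = 0) :
    F.IsRoot (cos (2 * x)) := by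
  rw [IsRoot, hF.eval_cos_two_mul, hx, mul_zero]

lemma mem_Icc_of_isRoot (hF : IsVertexPolynomial F m N) (hα : N * α = π / 2) {z : ℝ}
    (hz : F.IsRoot z) : z ∈ Set.Icc (-1) (cos (2 * α)) := by
  obtain ⟨w, hw, rfl⟩ := exists_isRoot_comp_of_isRoot hF.splits_comp
    (leadingCoeff_ne_zero.mp hF.leadingCoeff_pos.ne') (by simp) hz
  have hw_sq : w ^ 2 ≤ cos α ^ 2 := by
    rw [hF, root_mul] at hw
    rcases hw with hw | hw
    · obtain ⟨rfl, -⟩ : w = 0 ∧ m ≠ 0 := by simpa using hw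
      simp [sq_nonneg]
    · exact sq_le_sq.mpr ((abs_le_cos_of_isRoot_T_real hα hw).trans (le_abs_self _))
  rw [Chebyshev.T_two, cos_two_mul]
  simp only [eval_sub, eval_mul, eval_ofNat, eval_pow, eval_X, eval_one]
  constructor <;> nlinarith [sq_nonneg w]

lemma derivative_eval_mul_sin (hF : IsVertexPolynomial F m N) (hα : N * α = π / 2) :
    F.derivative.eval (cos (2 * α)) * (2 * sin (2 * α)) = N * cos α ^ m := by
  have hchain : 2 * (2 * cos α) * F.derivative.eval (cos (2 * α)) =
      cos α ^ m * (N * (Chebyshev.U ℝ (N - 1)).eval (cos α)) := by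
    simpa [derivative_comp, Chebyshev.T_derivative_eq_U, hα] using
      congrArg (fun p => eval (cos α) (derivative p)) hF
  have hU : (Chebyshev.U ℝ (N - 1)).eval (cos α) * sin α = 1 := by
    rw [Chebyshev.U_real_cos]
    simp [hα]
  rw [sin_two_mul]
  linear_combination sin α * hchain + N * cos α ^ m * hU

lemma derivative_eval_pos (hF : IsVertexPolynomial F m N) (hα : N * α = π / 2) (hα0 : 0 < α)
    (hα1 : α < π / 2) : 0 < F.derivative.eval (cos (2 * α)) := by
  have hsin : 0 < sin (2 * α) := sin_pos_of_pos_of_lt_pi (by linarith) (by linarith)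
  have hcos : 0 < cos α := cos_pos_of_mem_Ioo ⟨by linarith, hα1⟩
  have hN : (0 : ℝ) < N := pos_of_mul_pos_left (hα ▸ pi_div_two_pos) hα0.le
  refine pos_of_mul_pos_left (b := 2 * sin (2 * α)) ?_ (by positivity)
  rw [hF.derivative_eval_mul_sin hα]
  positivity

lemma abs_eval_cos_two_mul_le (hF : IsVertexPolynomial F m N) (hα : N * α = π / 2) (hα0 : 0 < α)
    (hα3 : 3 * α ≤ π / 2) {x : ℝ} (hαx : α ≤ x) (hx : x ≤ π / 2) :
    |F.eval (cos (2 * x))| ≤ F.derivative.eval (cos (2 * α)) * (cos (2 * α) - cos (2 * x)) := by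
  have hF' := hF.derivative_eval_pos hα hα0 (by linarith)
  have hsin : 0 ≤ sin (x - α) := sin_nonneg_of_nonneg_of_le_pi (by linarith) (by linarith)
  have hcos : 0 ≤ cos x := cos_nonneg_of_mem_Icc ⟨by linarith, hx⟩
  have hcos_le : cos x ≤ cos α := cos_le_cos_of_nonneg_of_le_pi hα0.le (by linarith) hαx
  have hcosα : 0 ≤ cos α := hcos.trans hcos_le
  have hcosN : |cos (N * x)| ≤ N * sin (x - α) := by
    have hshift : cos (N * x) = -sin (N * (x - α)) := by
      rw [← cos_add_pi_div_two, ← hα]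
      ring_nf
    simpa [hshift, abs_of_nonneg hsin] using abs_sin_nat_mul_le N (x - α)
  calc |F.eval (cos (2 * x))| = cos x ^ m * |cos (N * x)| := by
        rw [hF.eval_cos_two_mul, abs_mul, abs_of_nonneg (by positivity)]
    _ ≤ cos α ^ m * (N * sin (x - α)) := by
        gcongr
    _ = F.derivative.eval (cos (2 * α)) * (2 * sin (2 * α) * sin (x - α)) := by
        linear_combination -sin (x - α) * hF.derivative_eval_mul_sin hα
    _ ≤ F.derivative.eval (cos (2 * α)) * (2 * sin (x + α) * sin (x - α)) := by
        gcongr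
        exact sin_le_sin_of_le_of_le_pi_sub (by linarith) (by linarith) (by linarith)
    _ = F.derivative.eval (cos (2 * α)) * (cos (2 * α) - cos (2 * x)) := by
        rw [two_mul_sin_mul_sin]
        ring_nf

lemma derivative_mul_sub_add_eval_nonneg (hF : IsVertexPolynomial F m N)
    (heven : Even F.natDegree) (hα : N * α = π / 2) (hα0 : 0 < α) (hα3 : 3 * α ≤ π / 2) (t : ℝ) :
    0 ≤ F.derivative.eval (cos (2 * α)) * (cos (2 * α) - t) + F.eval t := by
  have hF' := hF.derivative_eval_pos hα hα0 (by linarith)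
  rcases le_total (cos (2 * α)) t with hright | hleft
  · have hroot : F.IsRoot (cos (2 * α)) := hF.isRoot_cos_two_mul (by rw [hα, cos_pi_div_two])
    have htangent := tangent_le_eval_of_splits hF.splits hF.leadingCoeff_pos.le hroot
      (fun r hr => (hF.mem_Icc_of_isRoot hα hr).2) hright
    linarith
  rcases le_total t (-1) with hout | hin
  · have hnonneg := eval_nonneg_of_splits_of_even_natDegree hF.splits hF.leadingCoeff_pos.le heven
      fun r hr => hout.trans (hF.mem_Icc_of_isRoot hα hr).1
    exact add_nonneg (mul_nonneg hF'.le (sub_nonneg.mpr hleft)) hnonneg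
  · obtain ⟨x, hαx, hx, rfl⟩ :=
      exists_cos_two_mul_eq hα0.le (by linarith) hin hleft
    linarith [neg_abs_le (F.eval (cos (2 * x))), hF.abs_eval_cos_two_mul_le hα hα0 hα3 hαx hx]

end IsVertexPolynomial

theorem exists_nonneg_eval_eq_cos_sub {N n : ℕ} (hN : 3 ≤ N) (hn : N ≤ 4 * n) :
    ∃ p : ℝ[X], p.natDegree ≤ 2 * n ∧ (∀ t, 0 ≤ p.eval t) ∧
      ∀ x, cos (N * x) = 0 → p.eval (cos (2 * x)) = cos (π / N) - cos (2 * x) := by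
  obtain ⟨m, hm⟩ := Nat.exists_eq_add_of_le' hn
  obtain ⟨F, hF⟩ : ∃ F, IsVertexPolynomial F m N :=
    exists_comp_T_two_eq_X_pow_mul_T m N (by grind)
  have hdeg : F.natDegree = 2 * n := by linarith [hF.two_mul_natDegree]
  have hN3 : (3 : ℝ) ≤ N := by exact_mod_cast hN
  obtain ⟨α, hα⟩ : ∃ α : ℝ, N * α = π / 2 := ⟨π / 2 / N, by field_simp⟩
  have hα0 : 0 < α := pos_of_mul_pos_right (hα ▸ pi_div_two_pos) (by positivity)
  have hα3 : 3 * α ≤ π / 2 := hα ▸ mul_le_mul_of_nonneg_right hN3 hα0.le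
  have hfacet : π / N = 2 * α := by
    rw [div_eq_iff (by positivity)]
    linear_combination -2 * hα
  set D := F.derivative.eval (cos (2 * α))
  have hD : 0 < D := hF.derivative_eval_pos hα hα0 (by linarith)
  refine ⟨C (cos (2 * α)) - X + C D⁻¹ * F, ?_, fun t => ?_, fun x hx => ?_⟩
  · refine natDegree_add_le_of_degree_le ((natDegree_sub_le _ _).trans ?_)
      ((natDegree_C_mul_le _ _).trans hdeg.le)
    rw [natDegree_C, natDegree_X]
    omega
  · have hscale : (C (cos (2 * α)) - X + C D⁻¹ * F).eval t =
        D⁻¹ * (D * (cos (2 * α) - t) + F.eval t) := by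
      simp only [eval_add, eval_sub, eval_mul, eval_C, eval_X]
      field_simp
    rw [hscale]
    exact mul_nonneg (inv_nonneg.mpr hD.le)
      (hF.derivative_mul_sub_add_eval_nonneg (hdeg ▸ even_two_mul n) hα hα0 hα3 t)
  · simp [(hF.isRoot_cos_two_mul hx).eq_zero, hfacet]

/-- The facet-defining linear function `ℓ(x,y) = cos(π/N) − x` of the regular `N`-gon agrees
with a sum of squares of univariate polynomials of degree at most `⌈N/4⌉` on the vertices. -/
theorem thetaRank_ub (N : ℕ) (hN : 3 ≤ N) :
    ∃ (m : ℕ) (h : Fin m → Polynomial ℝ),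
      (∀ j, (h j).natDegree ≤ ⌈(N : ℚ) / 4⌉₊) ∧
      ∀ i ∈ Finset.Icc 1 N,
        Real.cos (π / N) - Real.cos ((2 * (i : ℝ) - 1) * π / N) =
          ∑ j, ((h j).eval (Real.cos ((2 * (i : ℝ) - 1) * π / N))) ^ 2 := by
  have hceil : N ≤ 4 * ⌈(N : ℚ) / 4⌉₊ := by
    have := Nat.le_ceil ((N : ℚ) / 4)
    rw [div_le_iff₀' (by norm_num)] at this
    exact_mod_cast this
  obtain ⟨p, hdeg, hp, heval⟩ := exists_nonneg_eval_eq_cos_sub hN hceil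
  obtain ⟨m, h, hh, rfl⟩ := exists_sum_sq_of_eval_nonneg hdeg hp
  refine ⟨m, h, hh, fun i _ => ?_⟩
  have hN0 : (N : ℝ) ≠ 0 := by positivity
  set x : ℝ := (2 * i - 1) * π / (2 * N) with hx
  have hangle : (2 * (i : ℝ) - 1) * π / N = 2 * x := by rw [hx]; field_simp
  have hcos : cos (N * x) = 0 :=
    cos_eq_zero_iff.mpr ⟨i - 1, by rw [hx]; push_cast; field_simp; ring⟩
  rw [hangle, ← heval x hcos, eval_finsetSum]
  simp only [eval_pow]
end

section
/- Let N ≥ 3 be an integer. Suppose h_1, …, h_m are real polynomials in two variables such that cos(π/N) − cos(θ_i) = Σ_{j=1}^m h_j(cos θ_i, sin θ_i)² for every i ∈ {1, …, N}, where θ_i = (2i−1)π/N. Then some h_j has total degree at least N/4. (Hence the sum-of-squares/Lasserre hierarchy for the regular N-gon requires at least N/4 iterations.) -/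
open Real

/-!
Write a point of the unit circle as `z = x + y * I`, so that `2 * z * x = z ^ 2 + 1` and
`2 * I * z * y = z ^ 2 - 1`. Hence a bivariate polynomial of total degree `k`, multiplied by
`z ^ k`, is on the circle a univariate polynomial in `z` of degree at most `2 * k`, and it vanishes
on the whole circle as soon as it vanishes at more than `2 * k` of its points.

If `ℓ` agrees with `∑ j, h j ^ 2` at `N` points of the circle and all degrees are small compared to
`N`, the two therefore agree on the whole circle, so that `ℓ` is nonnegative there. But the facet
function `cos (π / N) - x` is negative at `(1, 0)`.
-/

section HomogeneousSubstitution

open Polynomial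

variable {σ R A : Type*} [CommSemiring R] [CommSemiring A] [Algebra R A]

/-- The polynomial `c ^ k * H (a / c)` with denominators cleared: the result of substituting the
fractions `a i / c` with common denominator `c` into a multivariate polynomial `H`. The truncated
subtraction makes this meaningful only for `H.totalDegree ≤ k`. -/
noncomputable def homogeneousSubst (H : MvPolynomial σ R) (k : ℕ) (a : σ → A[X]) (c : A[X]) :
    A[X] :=
  ∑ s ∈ H.support,
    C (algebraMap R A (H.coeff s)) * ((∏ i ∈ s.support, a i ^ s i) * c ^ (k - s.degree))

lemma degree_le_of_mem_support {H : MvPolynomial σ R} {k : ℕ} (hH : H.totalDegree ≤ k)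
    {s : σ →₀ ℕ} (hs : s ∈ H.support) : s.degree ≤ k :=
  (MvPolynomial.le_totalDegree hs).trans hH

lemma natDegree_homogeneousSubst_le {H : MvPolynomial σ R} {k d : ℕ} {a : σ → A[X]} {c : A[X]}
    (hH : H.totalDegree ≤ k) (ha : ∀ i, (a i).natDegree ≤ d) (hc : c.natDegree ≤ d) :
    (homogeneousSubst H k a c).natDegree ≤ k * d := by
  refine natDegree_sum_le_of_forall_le _ _ fun s hs => (natDegree_C_mul_le _ _).trans ?_
  have hprod : (∏ i ∈ s.support, a i ^ s i).natDegree ≤ s.degree * d := by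
    rw [Finsupp.degree_apply, Finset.sum_mul]
    exact (natDegree_prod_le _ _).trans
      (Finset.sum_le_sum fun i _ => natDegree_pow_le_of_le _ (ha i))
  calc _ ≤ s.degree * d + (k - s.degree) * d :=
        natDegree_mul_le_of_le hprod (natDegree_pow_le_of_le _ hc)
    _ = k * d := by rw [← add_mul, Nat.add_sub_cancel' (degree_le_of_mem_support hH hs)]

lemma eval_homogeneousSubst {H : MvPolynomial σ R} {k : ℕ} {a : σ → A[X]} {c : A[X]}
    (hH : H.totalDegree ≤ k) {z : A} {v : σ → A} (hv : ∀ i, (a i).eval z = c.eval z * v i) :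
    (homogeneousSubst H k a c).eval z = c.eval z ^ k * MvPolynomial.aeval v H := by
  rw [homogeneousSubst, eval_finsetSum, MvPolynomial.aeval_def, MvPolynomial.eval₂_eq,
    Finset.mul_sum]
  refine Finset.sum_congr rfl fun s hs => ?_
  have hpow : c.eval z ^ k = c.eval z ^ s.degree * c.eval z ^ (k - s.degree) := by
    rw [← pow_add, Nat.add_sub_cancel' (degree_le_of_mem_support hH hs)]
  have hprod : ∏ i ∈ s.support, (c.eval z * v i) ^ s i =
      c.eval z ^ s.degree * ∏ i ∈ s.support, v i ^ s i := by
    rw [Finsupp.degree_apply, ← Finset.prod_pow_eq_pow_sum, ← Finset.prod_mul_distrib]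
    simp only [mul_pow]
  simp only [eval_mul, eval_C, eval_prod, eval_pow, hv, hprod, hpow]
  ring

end HomogeneousSubstitution

section UnitCircle

/-- The Cartesian coordinates of a point of the unit circle, as an evaluation point for bivariate
polynomials. -/
def circleCoords (z : Circle) : Fin 2 → ℝ := ![(z : ℂ).re, (z : ℂ).im]

lemma circleCoords_exp (θ : ℝ) : circleCoords (Circle.exp θ) = ![cos θ, sin θ] := by
  simp [circleCoords, Complex.exp_ofReal_mul_I_re, Complex.exp_ofReal_mul_I_im]

open Polynomial in
/-- The numerators of the parametrization `x = (z ^ 2 + 1) / (2 * z)`,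
`y = (z ^ 2 - 1) / (2 * I * z)` of the unit circle by `z = x + y * I`, over the common
denominator `z`. -/
noncomputable def circleNumerators : Fin 2 → ℂ[X] :=
  ![C (1 / 2) * (X ^ 2 + 1), C (-Complex.I / 2) * (X ^ 2 - 1)]

lemma natDegree_circleNumerators_le (i : Fin 2) : (circleNumerators i).natDegree ≤ 2 := by
  fin_cases i <;> simp only [circleNumerators] <;> dsimp <;> compute_degree

lemma eval_circleNumerators (z : Circle) (i : Fin 2) :
    (circleNumerators i).eval (z : ℂ) = z * (circleCoords z i : ℂ) := by
  have hconj : (z : ℂ) * (starRingEnd ℂ) z = 1 := by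
    rw [← Circle.coe_inv_eq_conj, Circle.coe_inv, mul_inv_cancel₀ z.coe_ne_zero]
  fin_cases i
  · simp only [circleNumerators, circleCoords, Fin.zero_eta, Matrix.cons_val_zero,
      Polynomial.eval_mul, Polynomial.eval_C, Polynomial.eval_add, Polynomial.eval_pow,
      Polynomial.eval_X, Polynomial.eval_one, Complex.re_eq_add_conj]
    linear_combination -(1 / 2) * hconj
  · simp only [circleNumerators, circleCoords, Fin.mk_one, Matrix.cons_val_one,
      Matrix.cons_val_fin_one, Polynomial.eval_mul, Polynomial.eval_C, Polynomial.eval_sub,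
      Polynomial.eval_pow, Polynomial.eval_X, Polynomial.eval_one, Complex.im_eq_sub_conj]
    field_simp [Complex.I_ne_zero]
    linear_combination hconj - ((z : ℂ) ^ 2 - 1) * Complex.I_sq

lemma eval_circleCoords_eq_zero_of_forall_mem {G : MvPolynomial (Fin 2) ℝ} {S : Finset Circle}
    (hS : 2 * G.totalDegree < S.card)
    (hG : ∀ z ∈ S, MvPolynomial.eval (circleCoords z) G = 0) (w : Circle) :
    MvPolynomial.eval (circleCoords w) G = 0 := by
  set P := homogeneousSubst G G.totalDegree circleNumerators (Polynomial.X : Polynomial ℂ)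
  have hP (z : Circle) : P.eval (z : ℂ) =
      (z : ℂ) ^ G.totalDegree * (MvPolynomial.eval (circleCoords z) G : ℂ) := by
    rw [eval_homogeneousSubst le_rfl (v := fun i => (circleCoords z i : ℂ))
      (by simpa using eval_circleNumerators z), Polynomial.eval_X]
    congr 1
    exact MvPolynomial.aeval_algebraMap_apply ℂ (circleCoords z) G
  have hdeg : P.natDegree < S.card :=
    calc P.natDegree ≤ G.totalDegree * 2 :=
          natDegree_homogeneousSubst_le le_rfl natDegree_circleNumerators_le (by simp)
      _ < S.card := by rwa [mul_comm]
  have hP_zero : P = 0 :=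
    Polynomial.eq_zero_of_natDegree_lt_card_of_eval_eq_zero P
      (f := fun z : S => ((z : Circle) : ℂ)) (Circle.coe_injective.comp Subtype.val_injective)
      (fun z => by rw [hP, hG z z.2, Complex.ofReal_zero, mul_zero]) (by simpa using hdeg)
  simpa [hP_zero] using hP w

end UnitCircle

theorem thetaRank_lb_general {ι : Type*} [Fintype ι] {ℓ : MvPolynomial (Fin 2) ℝ}
    {S : Finset Circle} (hℓ : 2 * ℓ.totalDegree < S.card) {w : Circle}
    (hw : MvPolynomial.eval (circleCoords w) ℓ < 0) (h : ι → MvPolynomial (Fin 2) ℝ)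
    (hcert : ∀ z ∈ S, MvPolynomial.eval (circleCoords z) ℓ =
      ∑ j, MvPolynomial.eval (circleCoords z) (h j) ^ 2) :
    ∃ j, S.card ≤ 4 * (h j).totalDegree := by
  by_contra! hlt
  have hsq (j : ι) : (h j ^ 2).totalDegree ≤ (S.card - 1) / 2 := by
    have := MvPolynomial.totalDegree_pow (h j) 2
    have := hlt j
    omega
  have hdeg : (ℓ - ∑ j, h j ^ 2).totalDegree ≤ (S.card - 1) / 2 :=
    (MvPolynomial.totalDegree_sub _ _).trans
      (max_le (by omega) (MvPolynomial.totalDegree_finsetSum_le fun j _ => hsq j))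
  have heq : MvPolynomial.eval (circleCoords w) (ℓ - ∑ j, h j ^ 2) = 0 :=
    eval_circleCoords_eq_zero_of_forall_mem (S := S) (by omega)
      (fun z hz => by simp only [map_sub, map_sum, map_pow, hcert z hz, sub_self]) w
  have hnonneg : 0 ≤ ∑ j, MvPolynomial.eval (circleCoords w) (h j) ^ 2 :=
    Finset.sum_nonneg fun j _ => sq_nonneg _
  simp only [map_sub, map_sum, map_pow] at heq
  linarith

section RegularPolygon

/-- The argument of the `i`-th vertex of the regular `N`-gon with a vertical rightmost edge. The
vertices are numbered from `1` to `N`. -/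
noncomputable def polygonAngle (N i : ℕ) : ℝ := (2 * (i : ℝ) - 1) * π / N

lemma polygonAngle_mem_Ico {N i : ℕ} (hi : i ∈ Finset.Icc 1 N) :
    polygonAngle N i ∈ Set.Ico 0 (2 * π) := by
  obtain ⟨hi_one, hi_le⟩ := Finset.mem_Icc.1 hi
  have hi_one' : (1 : ℝ) ≤ i := mod_cast hi_one
  have hi_le' : (i : ℝ) ≤ N := mod_cast hi_le
  constructor
  · have : 0 ≤ 2 * (i : ℝ) - 1 := by linarith
    exact div_nonneg (mul_nonneg this pi_nonneg) N.cast_nonneg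
  · rw [polygonAngle, div_lt_iff₀ (by linarith)]
    nlinarith [pi_pos]

lemma polygonAngle_injective {N : ℕ} (hN : N ≠ 0) : Function.Injective (polygonAngle N) := by
  intro i j hij
  simpa [polygonAngle, div_left_inj', hN, pi_ne_zero] using hij

open Classical in
/-- The vertex set of the regular `N`-gon with a vertical rightmost edge, in the unit circle. -/
noncomputable def polygonVertices (N : ℕ) : Finset Circle :=
  (Finset.Icc 1 N).image fun i => Circle.exp (polygonAngle N i)

lemma forall_mem_polygonVertices {N : ℕ} {p : Circle → Prop} :
    (∀ z ∈ polygonVertices N, p z) ↔ ∀ i ∈ Finset.Icc 1 N, p (Circle.exp (polygonAngle N i)) := by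
  classical exact Finset.forall_mem_image

lemma card_polygonVertices (N : ℕ) : (polygonVertices N).card = N := by
  rcases eq_or_ne N 0 with rfl | hN
  · simp [polygonVertices]
  · have hinj : Set.InjOn (fun i => Circle.exp (polygonAngle N i)) (Finset.Icc 1 N : Finset ℕ) :=
      (Circle.exp_injOn_Ico (by simp)).comp (polygonAngle_injective hN).injOn
        fun _ => polygonAngle_mem_Ico
    classical
    rw [polygonVertices, Finset.card_image_of_injOn hinj, Nat.card_Icc, Nat.add_sub_cancel]

open MvPolynomial in
/-- The linear function `cos (π / N) - x` defining the rightmost edge of the regular `N`-gon. -/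
noncomputable def rightmostFacet (N : ℕ) : MvPolynomial (Fin 2) ℝ := C (cos (π / N)) - X 0

lemma totalDegree_rightmostFacet_le (N : ℕ) : (rightmostFacet N).totalDegree ≤ 1 :=
  (MvPolynomial.totalDegree_sub _ _).trans (by simp)

lemma eval_rightmostFacet (N : ℕ) (θ : ℝ) :
    MvPolynomial.eval (circleCoords (Circle.exp θ)) (rightmostFacet N) =
      cos (π / N) - cos θ := by
  simp [rightmostFacet, circleCoords_exp]

lemma eval_rightmostFacet_one_neg {N : ℕ} (hN : N ≠ 0) :
    MvPolynomial.eval (circleCoords 1) (rightmostFacet N) < 0 := by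
  have hN_one : (1 : ℝ) ≤ N := mod_cast Nat.one_le_iff_ne_zero.2 hN
  rw [← Circle.exp_zero, eval_rightmostFacet, sub_neg]
  exact cos_lt_cos_of_nonneg_of_le_pi le_rfl (div_le_self pi_pos.le hN_one) (by positivity)

end RegularPolygon

/-- Any sum-of-squares certificate for the facet inequality `cos(π/N) − x ≥ 0` on the
vertices of the regular `N`-gon uses a polynomial of total degree at least `N/4`. -/
theorem thetaRank_lb (N : ℕ) (hN : 3 ≤ N) (m : ℕ) (h : Fin m → MvPolynomial (Fin 2) ℝ)
    (hcert : ∀ i ∈ Finset.Icc 1 N,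
      Real.cos (π / N) - Real.cos ((2 * (i : ℝ) - 1) * π / N) =
        ∑ j, (MvPolynomial.eval
          ![Real.cos ((2 * (i : ℝ) - 1) * π / N), Real.sin ((2 * (i : ℝ) - 1) * π / N)]
          (h j)) ^ 2) :
    ∃ j, (N : ℝ) / 4 ≤ ((h j).totalDegree : ℝ) := by
  have hfacet : 2 * (rightmostFacet N).totalDegree < (polygonVertices N).card := by
    have := totalDegree_rightmostFacet_le N
    rw [card_polygonVertices]
    omega
  have hvertices : ∀ z ∈ polygonVertices N,
      MvPolynomial.eval (circleCoords z) (rightmostFacet N) =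
        ∑ j, MvPolynomial.eval (circleCoords z) (h j) ^ 2 := by
    refine forall_mem_polygonVertices.2 fun i hi => ?_
    rw [eval_rightmostFacet, circleCoords_exp]
    exact hcert i hi
  obtain ⟨j, hj⟩ := thetaRank_lb_general hfacet (eval_rightmostFacet_one_neg (by omega)) h
    hvertices
  rw [card_polygonVertices] at hj
  exact ⟨j, (div_le_iff₀' four_pos).2 (mod_cast hj)⟩
end

section
/- For every integer n ≥ 1 and every real number θ, the following identity holds: (cos(π/2ⁿ) − cos θ)/sin(π/2ⁿ) = Σ_{k=0}^{n−2} (cos(2^k·π/2ⁿ) − cos(2^k θ))² / (2^k · sin(2^{k+1}·π/2ⁿ)) − cos(2^{n−1} θ)/2^{n−1}, where for n = 1 the sum on the right-hand side is empty. -/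
open Real Finset

/-!
The double-angle formulas write `(cos a - cos θ) / sin a` as a square over `sin 2a` plus half of
the same quotient at the doubled angles `2a`, `2θ`. Iterating `m` times collects `m` squares and
leaves a remainder at `2ᵐ a`, `2ᵐ θ`. For `a = π / 2ⁿ` and `m = n - 1` the angle `2ᵐ a` is `π / 2`,
where the remainder reduces to `-cos (2ᵐ θ) / 2ᵐ`.
-/

lemma sin_ne_zero_of_sin_two_mul_ne_zero {a : ℝ} (ha : sin (2 * a) ≠ 0) : sin a ≠ 0 := by
  rw [sin_two_mul] at ha
  exact right_ne_zero_of_mul (left_ne_zero_of_mul ha)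

lemma cos_sub_cos_div_sin_eq_sq_div_add {a : ℝ} (ha : sin (2 * a) ≠ 0) (θ : ℝ) :
    (cos a - cos θ) / sin a =
      (cos a - cos θ) ^ 2 / sin (2 * a) + (cos (2 * a) - cos (2 * θ)) / (2 * sin (2 * a)) := by
  have hsin : sin a ≠ 0 := sin_ne_zero_of_sin_two_mul_ne_zero ha
  have hcos : cos a ≠ 0 := by
    rw [sin_two_mul] at ha
    exact right_ne_zero_of_mul ha
  rw [sin_two_mul, cos_two_mul, cos_two_mul]
  field_simp
  ring

lemma cos_sub_cos_div_sin_eq_sum_sq_div_add {a : ℝ} (m : ℕ) (ha : sin (2 ^ m * a) ≠ 0) (θ : ℝ) :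
    (cos a - cos θ) / sin a =
      (∑ k ∈ range m,
        (cos (2 ^ k * a) - cos (2 ^ k * θ)) ^ 2 / (2 ^ k * sin (2 ^ (k + 1) * a))) +
      (cos (2 ^ m * a) - cos (2 ^ m * θ)) / (2 ^ m * sin (2 ^ m * a)) := by
  induction m with
  | zero => simp
  | succ m ih =>
    have hdouble (x : ℝ) : 2 ^ (m + 1) * x = 2 * (2 ^ m * x) := by ring
    rw [hdouble] at ha
    have hremainder := cos_sub_cos_div_sin_eq_sq_div_add ha (2 ^ m * θ)
    rw [ih (sin_ne_zero_of_sin_two_mul_ne_zero ha), sum_range_succ, add_assoc]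
    congr 1
    rw [mul_comm (2 ^ m) (sin (2 ^ m * a)), ← div_div, hremainder, hdouble a, hdouble θ]
    field

/-- The telescoping trigonometric identity behind the sparse sum-of-squares certificate
for the regular `2ⁿ`-gon. -/
theorem sos_identity_pow_two (n : ℕ) (hn : 1 ≤ n) (θ : ℝ) :
    (Real.cos (π / 2 ^ n) - Real.cos θ) / Real.sin (π / 2 ^ n) =
      (∑ k ∈ Finset.range (n - 1),
        (Real.cos (2 ^ k * π / 2 ^ n) - Real.cos (2 ^ k * θ)) ^ 2 /
          (2 ^ k * Real.sin (2 ^ (k + 1) * π / 2 ^ n)))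
      - Real.cos (2 ^ (n - 1) * θ) / 2 ^ (n - 1) := by
  have hangle : 2 ^ (n - 1) * (π / 2 ^ n) = π / 2 := by
    rw [← pow_sub_one_mul (by lia : n ≠ 0) (2 : ℝ)]
    field
  have hsin : sin (2 ^ (n - 1) * (π / 2 ^ n)) ≠ 0 := by simp [hangle]
  simp only [mul_div_assoc]
  rw [cos_sub_cos_div_sin_eq_sum_sq_div_add (n - 1) hsin θ, hangle, cos_pi_div_two,
    sin_pi_div_two, zero_sub, mul_one, neg_div, ← sub_eq_add_neg]
end

section
/- Let n ≥ 1 be an integer and set N = 2ⁿ. For every i ∈ {1, …, N}, writing θ_i = (2i−1)π/N, one has cos(π/N) − cos(θ_i) = Σ_{k=0}^{n−2} [sin(π/N) / (2^k · sin(2^{k+1}·π/N))] · (cos(2^k·π/N) − cos(2^k θ_i))², where for n = 1 the sum is empty. In other words, the facet-defining linear function ℓ(x,y) = cos(π/2ⁿ) − x of the regular 2ⁿ-gon is, on the vertices of the regular 2ⁿ-gon, a nonnegative weighted sum of the n−1 squares (cos(2^k·π/2ⁿ) − cos(2^k θ))² for k = 0, …, n−2. -/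
open Real Finset

/-!
Put `D k = cos (2ᵏ α) - cos (2ᵏ θ)`. The double angle formula gives
`D k ^ 2 = 2 * cos (2ᵏ α) * D k - D (k + 1) / 2`, and dividing by `2ᵏ * sin (2ᵏ⁺¹ α)` makes the sum
of squares telescope in the quantities `D k / (2ᵏ * sin (2ᵏ α))`. Multiplied by `sin α`, the first
of them is `cos α - cos θ`; the last one is zero as soon as `cos (2ᵐ α) = cos (2ᵐ θ)`. At the
vertices of the `2ᵐ⁺¹`-gon both of these cosines vanish.
-/

lemma sq_cos_sub_cos (a t : ℝ) :
    (cos a - cos t) ^ 2 = 2 * cos a * (cos a - cos t) - (cos (2 * a) - cos (2 * t)) / 2 := by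
  rw [cos_two_mul, cos_two_mul]
  ring

lemma cos_ne_zero_of_sin_two_mul_ne_zero {a : ℝ} (ha : sin (2 * a) ≠ 0) : cos a ≠ 0 :=
  fun h ↦ ha (by rw [sin_two_mul, h, mul_zero])

lemma cos_sub_cos_div_sin {a : ℝ} (ha : sin (2 * a) ≠ 0) (t : ℝ) :
    (cos a - cos t) / sin a =
      (cos a - cos t) ^ 2 / sin (2 * a) + (cos (2 * a) - cos (2 * t)) / (2 * sin (2 * a)) := by
  have hsin : sin a ≠ 0 := sin_ne_zero_of_sin_two_mul_ne_zero ha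
  have hcos : cos a ≠ 0 := cos_ne_zero_of_sin_two_mul_ne_zero ha
  rw [sq_cos_sub_cos, sin_two_mul]
  field_simp
  ring

lemma cos_sub_cos_eq_sum_sq_add (α θ : ℝ) {m : ℕ} (hα : sin (2 ^ m * α) ≠ 0) :
    cos α - cos θ =
      ∑ k ∈ range m, sin α / (2 ^ k * sin (2 ^ (k + 1) * α)) *
          (cos (2 ^ k * α) - cos (2 ^ k * θ)) ^ 2 +
        sin α / 2 ^ m * ((cos (2 ^ m * α) - cos (2 ^ m * θ)) / sin (2 ^ m * α)) := by
  induction m with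
  | zero =>
    have hsin : sin α ≠ 0 := by simpa using hα
    simp [mul_div_cancel₀ _ hsin]
  | succ m ih =>
    have double (x : ℝ) : 2 ^ (m + 1) * x = 2 * (2 ^ m * x) := by ring
    rw [double] at hα
    rw [ih (sin_ne_zero_of_sin_two_mul_ne_zero hα), cos_sub_cos_div_sin hα, sum_range_succ,
      double, double]
    ring

theorem sparse_sos_certificate_general (α θ : ℝ) {m : ℕ} (hsin : sin (2 ^ m * α) ≠ 0)
    (hcos : cos (2 ^ m * α) = cos (2 ^ m * θ)) :
    cos α - cos θ =
      ∑ k ∈ range m, sin α / (2 ^ k * sin (2 ^ (k + 1) * α)) *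
        (cos (2 ^ k * α) - cos (2 ^ k * θ)) ^ 2 := by
  rw [cos_sub_cos_eq_sum_sq_add α θ hsin, hcos, sub_self, zero_div, mul_zero, add_zero]

lemma two_pow_mul_pi_div_two_pow_succ (m : ℕ) : 2 ^ m * (π / 2 ^ (m + 1)) = π / 2 := by
  field_simp
  ring

lemma cos_two_pow_mul_odd_mul_pi_div (m : ℕ) (j : ℤ) :
    cos (2 ^ m * ((2 * j - 1) * π / 2 ^ (m + 1))) = 0 := by
  rw [mul_div_assoc, mul_left_comm, two_pow_mul_pi_div_two_pow_succ, cos_eq_zero_iff]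
  exact ⟨j - 1, by push_cast; ring⟩

/-- On the vertices of the regular `2ⁿ`-gon, the facet-defining linear function
`cos(π/2ⁿ) − x` is a nonnegative weighted sum of the squares
`(cos(2^k·π/2ⁿ) − cos(2^k θ))²` for `k = 0, …, n−2`. -/
theorem sparse_sos_certificate (n : ℕ) (hn : 1 ≤ n) :
    ∀ i ∈ Finset.Icc (1:ℕ) (2 ^ n),
      Real.cos (π / 2 ^ n) - Real.cos ((2 * (i : ℝ) - 1) * π / 2 ^ n) =
        ∑ k ∈ Finset.range (n - 1),
          (Real.sin (π / 2 ^ n) / (2 ^ k * Real.sin (2 ^ (k + 1) * π / 2 ^ n))) *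
            (Real.cos (2 ^ k * π / 2 ^ n) -
              Real.cos (2 ^ k * ((2 * (i : ℝ) - 1) * π / 2 ^ n))) ^ 2 := by
  intro i _
  obtain ⟨m, rfl⟩ := Nat.exists_eq_add_of_le' hn
  have hcos := cos_two_pow_mul_odd_mul_pi_div m i
  simpa only [mul_div_assoc, Nat.add_sub_cancel] using
    sparse_sos_certificate_general (π / 2 ^ (m + 1)) ((2 * i - 1) * π / 2 ^ (m + 1))
      (by simp [two_pow_mul_pi_div_two_pow_succ])
      (by simpa [two_pow_mul_pi_div_two_pow_succ] using hcos.symm)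
end

section
/- Let n ≥ 2 be an integer. The convex hull of the vertex set of the regular 2ⁿ-gon equals the set of points (x₀, y₀) ∈ ℝ² for which there exist real numbers x₁, y₁, …, x_{n−2}, y_{n−2}, y_{n−1} such that for every k = 1, …, n−2 the 3×3 real symmetric matrix [[1, x_{k−1}, y_{k−1}], [x_{k−1}, (1+x_k)/2, y_k/2], [y_{k−1}, y_k/2, (1−x_k)/2]] is positive semidefinite, and the 3×3 real symmetric matrix [[1, x_{n−2}, y_{n−2}], [x_{n−2}, 1/2, y_{n−1}/2], [y_{n−2}, y_{n−1}/2, 1/2]] is positive semidefinite. (For n = 2 only the last matrix condition appears, involving x₀, y₀, y₁.) In particular the regular 2ⁿ-gon has a psd lift over the product (S³₊)^{n−1} of n−1 copies of the 3×3 positive semidefinite cone. -/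
open Real Finset Matrix

/-!
Angle doubling sends the vertices of the regular `2N`-gon to those of the regular `N`-gon, and the
`3 × 3` matrix of a pair `(p, q)` is the linearisation of "`q` is `p` with its angle doubled": at
points of the unit circle it is the rank one matrix of `(1, p₁, p₂)`. As the matrix is affine in
`(p, q)`, every point of the `2N`-gon has a partner `q` in the `N`-gon.

Conversely, evaluating the quadratic form at `(-⟨u, p⟩, u)` for a unit vector `u` of angle `φ`
gives `⟨u, p⟩² ≤ (1 + ⟨w, q⟩) / 2` with `w` of angle `2φ`, and the half-angle formula turns the
facet inequalities of the `N`-gon for `q` into those of the `2N`-gon for `p`.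

Hence each matrix halves the number of sides, and the recursion ends at `N = 2`, where the facet
inequalities degenerate to the line `x = 0`.
-/

/-- The point of the unit circle with angle `θ`, in `ℝ × ℝ` rather than `ℂ` to match the ambient
space of the polygon. -/
noncomputable def circlePoint (θ : ℝ) : ℝ × ℝ := (cos θ, sin θ)

/-- The coordinate of `p` along the unit vector of angle `φ`, i.e. the Euclidean inner product of
`p` with `circlePoint φ` (the type `ℝ × ℝ` carries the sup norm and no inner product). -/
noncomputable def coordAlong (φ : ℝ) (p : ℝ × ℝ) : ℝ := cos φ * p.1 + sin φ * p.2

lemma coordAlong_circlePoint (φ θ : ℝ) : coordAlong φ (circlePoint θ) = cos (θ - φ) := by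
  simp only [coordAlong, circlePoint, cos_sub]
  ring

lemma circlePoint_add_int_mul_two_pi (θ : ℝ) (k : ℤ) :
    circlePoint (θ + k * (2 * π)) = circlePoint θ := by
  simp only [circlePoint, cos_add_int_mul_two_pi, sin_add_int_mul_two_pi]

lemma exists_eq_mul_coordAlong (f : ℝ × ℝ →L[ℝ] ℝ) :
    ∃ r ψ : ℝ, 0 ≤ r ∧ ∀ p, f p = r * coordAlong ψ p := by
  set c : ℂ := ⟨f (1, 0), f (0, 1)⟩
  refine ⟨‖c‖, c.arg, norm_nonneg c, fun p => ?_⟩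
  have hp : p = p.1 • (1, 0) + p.2 • (0, 1) := by ext <;> simp
  calc f p = p.1 * c.re + p.2 * c.im := by
        conv_lhs => rw [hp, map_add, map_smul, map_smul, smul_eq_mul, smul_eq_mul]
    _ = ‖c‖ * coordAlong c.arg p := by
        rw [← Complex.norm_mul_cos_arg c, ← Complex.norm_mul_sin_arg c, coordAlong]
        ring

lemma mem_convexHull_of_coordAlong_le {S : Set (ℝ × ℝ)} (hS : S.Finite) {p : ℝ × ℝ}
    (h : ∀ ψ, ∃ v ∈ S, coordAlong ψ p ≤ coordAlong ψ v) : p ∈ convexHull ℝ S := by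
  by_contra hp
  obtain ⟨f, u, hlt, hgt⟩ := geometric_hahn_banach_closed_point (convex_convexHull ℝ S)
    (hS.isClosed_convexHull ℝ) hp
  obtain ⟨r, ψ, hr, hf⟩ := exists_eq_mul_coordAlong f
  obtain ⟨v, hv, hle⟩ := h ψ
  have hfv : f p ≤ f v := by
    rw [hf, hf]
    exact mul_le_mul_of_nonneg_left hle hr
  linarith [hlt v (subset_convexHull ℝ S hv)]

/-- The vertices of the regular `N`-gon, indexed periodically by `ℤ` so that neighbours and
doubled angles need no reduction modulo `N`. -/
def regularPolygonVertices (N : ℕ) : Set (ℝ × ℝ) :=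
  Set.range fun i : ℤ => circlePoint ((2 * i - 1) * π / N)

/-- The intersection of the half-planes bounded by the sides of the regular `N`-gon. It is the
polygon itself for `N ≥ 3`, but the unbounded line `x = 0` for `N = 2`. -/
def facetRegion (N : ℕ) : Set (ℝ × ℝ) :=
  {p | ∀ j : ℤ, coordAlong (2 * j * π / N) p ≤ cos (π / N)}

lemma regularPolygonVertices_eq_image {N : ℕ} (hN : 0 < N) :
    regularPolygonVertices N =
      (fun i : ℤ => circlePoint ((2 * i - 1) * π / N)) '' Set.Ioc 0 (N : ℤ) := by
  have hper : Function.Periodic (fun i : ℤ => circlePoint ((2 * i - 1) * π / N)) (N : ℤ) := by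
    intro i
    have hangle : (2 * ((i + N : ℤ) : ℝ) - 1) * π / N =
        (2 * i - 1) * π / N + (1 : ℤ) * (2 * π) := by
      push_cast
      field_simp
      ring
    simp only [hangle, circlePoint_add_int_mul_two_pi]
  simpa only [regularPolygonVertices, zero_add] using (hper.image_Ioc (Int.natCast_pos.2 hN) 0).symm

lemma regularPolygonVertices_eq_setOf {N : ℕ} (hN : 0 < N) :
    regularPolygonVertices N =
      {p | ∃ i ∈ Finset.Icc 1 N,
        p = (cos ((2 * (i : ℝ) - 1) * π / N), sin ((2 * (i : ℝ) - 1) * π / N))} := by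
  rw [regularPolygonVertices_eq_image hN]
  ext p
  constructor
  · rintro ⟨i, ⟨hi0, hiN⟩, rfl⟩
    lift i to ℕ using hi0.le
    exact ⟨i, Finset.mem_Icc.2 (by omega), by simp [circlePoint]⟩
  · rintro ⟨i, hi, rfl⟩
    rw [Finset.mem_Icc] at hi
    exact ⟨i, ⟨by omega, by omega⟩, by simp [circlePoint]⟩

lemma regularPolygonVertices_two_pow (n : ℕ) :
    regularPolygonVertices (2 ^ n) =
      {p | ∃ i ∈ Finset.Icc (1 : ℕ) (2 ^ n),
        p = (cos ((2 * (i : ℝ) - 1) * π / 2 ^ n), sin ((2 * (i : ℝ) - 1) * π / 2 ^ n))} := by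
  simpa using regularPolygonVertices_eq_setOf (N := 2 ^ n) (by positivity)

lemma finite_regularPolygonVertices {N : ℕ} (hN : 0 < N) : (regularPolygonVertices N).Finite := by
  rw [regularPolygonVertices_eq_image hN]
  exact (Set.finite_Ioc _ _).image _

lemma cos_odd_mul_pi_div_le {N : ℕ} (hN : 0 < N) (i : ℤ) :
    cos ((2 * i - 1) * π / N) ≤ cos (π / N) := by
  obtain ⟨k, ⟨hk0, hkN⟩, hk⟩ := (regularPolygonVertices_eq_image hN).subset ⟨i, rfl⟩
  have hcos : cos ((2 * k - 1) * π / N) = cos ((2 * i - 1) * π / N) := congrArg Prod.fst hk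
  have hN' : (0 : ℝ) < N := mod_cast hN
  have hk0' : (1 : ℝ) ≤ k := mod_cast hk0
  have hkN' : (k : ℝ) ≤ N := mod_cast hkN
  have sin_nonneg_of_le : ∀ t : ℝ, 0 ≤ t → t ≤ N → 0 ≤ sin (t * π / N) := fun t ht htN =>
    sin_nonneg_of_nonneg_of_le_pi (by positivity)
      ((div_le_iff₀ hN').2 (by nlinarith [pi_pos]))
  have hprod : cos (π / N) - cos ((2 * k - 1) * π / N) =
      2 * sin (k * π / N) * sin ((k - 1) * π / N) := by
    rw [show π / N = k * π / N - (k - 1) * π / N by ring,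
      show (2 * k - 1) * π / N = k * π / N + (k - 1) * π / N by ring, cos_sub, cos_add]
    ring
  have := mul_nonneg (sin_nonneg_of_le k (by linarith) hkN')
    (sin_nonneg_of_le (k - 1) (by linarith) (by linarith))
  linarith

lemma regularPolygonVertices_subset_facetRegion {N : ℕ} (hN : 0 < N) :
    regularPolygonVertices N ⊆ facetRegion N := by
  rintro _ ⟨i, rfl⟩ j
  have hangle : (2 * i - 1) * π / N - 2 * j * π / N = (2 * ((i - j : ℤ) : ℝ) - 1) * π / N := by
    push_cast
    ring
  rw [coordAlong_circlePoint, hangle]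
  exact cos_odd_mul_pi_div_le hN (i - j)

lemma convex_facetRegion (N : ℕ) : Convex ℝ (facetRegion N) := by
  intro p hp q hq s t hs ht hst j
  calc coordAlong (2 * j * π / N) (s • p + t • q)
      = s * coordAlong (2 * j * π / N) p + t * coordAlong (2 * j * π / N) q := by
        simp only [coordAlong, Prod.fst_add, Prod.snd_add, Prod.smul_fst, Prod.smul_snd,
          smul_eq_mul]
        ring
    _ ≤ s * cos (π / N) + t * cos (π / N) := by gcongr; exacts [hp j, hq j]
    _ = cos (π / N) := by rw [← add_mul, hst, one_mul]

-- The unit vector of angle `φ + β` is a nonnegative combination of those of angles `φ ± δ`, and all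
-- three inequalities are equalities at the vertex `circlePoint φ`.
lemma coordAlong_le_cos_of_adjacent {φ δ β : ℝ} {p : ℝ × ℝ} (hδ0 : 0 < δ) (hδ : δ < π / 2)
    (hβ : |β| ≤ δ) (hadd : coordAlong (φ + δ) p ≤ cos δ) (hsub : coordAlong (φ - δ) p ≤ cos δ) :
    coordAlong (φ + β) p ≤ cos β := by
  obtain ⟨hβ₁, hβ₂⟩ := abs_le.1 hβ
  have hsin2 : 0 < sin (2 * δ) := sin_pos_of_pos_of_lt_pi (by linarith) (by linarith)
  have hsin_add : 0 ≤ sin (δ + β) := sin_nonneg_of_nonneg_of_le_pi (by linarith) (by linarith)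
  have hsin_sub : 0 ≤ sin (δ - β) := sin_nonneg_of_nonneg_of_le_pi (by linarith) (by linarith)
  refine le_of_mul_le_mul_left ?_ hsin2
  calc sin (2 * δ) * coordAlong (φ + β) p
      = sin (δ + β) * coordAlong (φ + δ) p + sin (δ - β) * coordAlong (φ - δ) p := by
        simp only [coordAlong, sin_two_mul, sin_add, sin_sub, cos_add, cos_sub]
        ring
    _ ≤ sin (δ + β) * cos δ + sin (δ - β) * cos δ := by gcongr
    _ = sin (2 * δ) * cos β := by
        simp only [sin_two_mul, sin_add, sin_sub]
        ring

lemma exists_abs_sub_vertex_angle_le {N : ℕ} (hN : 0 < N) (ψ : ℝ) :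
    ∃ i : ℤ, |ψ - (2 * i - 1) * π / N| ≤ π / N := by
  have : (0 : ℝ) < N := mod_cast hN
  set t := ψ * N / (2 * π)
  have hψ : ψ = 2 * t * (π / N) := by simp only [t]; field_simp
  have hle := Int.le_ceil t
  have hlt := Int.ceil_lt_add_one t
  refine ⟨⌈t⌉, ?_⟩
  have hdiff : ψ - (2 * ⌈t⌉ - 1) * π / N = (2 * (t - ⌈t⌉) + 1) * (π / N) := by
    rw [hψ]
    ring
  have hπN : 0 < π / N := by positivity
  rw [hdiff, abs_mul, abs_of_pos hπN]
  exact mul_le_of_le_one_left hπN.le (abs_le.2 ⟨by linarith, by linarith⟩)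

theorem convexHull_regularPolygonVertices {N : ℕ} (hN : 3 ≤ N) :
    convexHull ℝ (regularPolygonVertices N) = facetRegion N := by
  have hN0 : 0 < N := by omega
  refine (convexHull_min (regularPolygonVertices_subset_facetRegion hN0)
    (convex_facetRegion N)).antisymm fun p hp => ?_
  refine mem_convexHull_of_coordAlong_le (finite_regularPolygonVertices hN0) fun ψ => ?_
  obtain ⟨i, hi⟩ := exists_abs_sub_vertex_angle_le hN0 ψ
  refine ⟨_, ⟨i, rfl⟩, ?_⟩
  set φ := (2 * i - 1) * π / N
  have hδ : π / N < π / 2 := by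
    have : (2 : ℝ) < N := mod_cast hN
    gcongr
  have hadd : coordAlong (φ + π / N) p ≤ cos (π / N) := by
    convert hp i using 2
    ring
  have hsub : coordAlong (φ - π / N) p ≤ cos (π / N) := by
    convert hp (i - 1) using 2
    push_cast
    ring
  rw [coordAlong_circlePoint, ← cos_neg, neg_sub]
  simpa only [add_sub_cancel] using
    coordAlong_le_cos_of_adjacent (by positivity) hδ hi hadd hsub

lemma facetRegion_two : facetRegion 2 = {p | p.1 = 0} := by
  ext p
  constructor
  · intro hp
    have hle : p.1 ≤ 0 := by simpa [coordAlong] using hp 0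
    have hge : 0 ≤ p.1 := by simpa [coordAlong] using hp 1
    exact le_antisymm hle hge
  · intro (hp : p.1 = 0) j
    have hangle : 2 * j * π / (2 : ℕ) = j * π := by push_cast; ring
    rw [hangle]
    simp [coordAlong, hp]

/-- The matrix whose positive semidefiniteness relaxes the relation "`q` is `p` with its angle
doubled" between points of the unit circle: since `cos² θ = (1 + cos 2θ) / 2`,
`sin² θ = (1 - cos 2θ) / 2` and `cos θ sin θ = sin 2θ / 2`, it is then `v vᵀ` with
`v = (1, p.1, p.2)`. -/
noncomputable def doublingMatrix (p q : ℝ × ℝ) : Matrix (Fin 3) (Fin 3) ℝ :=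
  !![1, p.1, p.2;
     p.1, (1 + q.1) / 2, q.2 / 2;
     p.2, q.2 / 2, (1 - q.1) / 2]

lemma doublingMatrix_circlePoint (θ : ℝ) :
    doublingMatrix (circlePoint θ) (circlePoint (2 * θ)) =
      vecMulVec ![1, cos θ, sin θ] (star ![1, cos θ, sin θ]) := by
  have hcos : (1 + cos (2 * θ)) / 2 = cos θ * cos θ := by rw [cos_two_mul]; ring
  have hsin : (1 - cos (2 * θ)) / 2 = sin θ * sin θ := by
    rw [cos_two_mul, cos_sq']
    ring
  have hmul : sin (2 * θ) / 2 = cos θ * sin θ := by rw [sin_two_mul]; ring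
  ext i j
  fin_cases i <;> fin_cases j <;>
    simp [doublingMatrix, circlePoint, vecMulVec_apply, hcos, hsin, hmul, mul_comm (sin θ)]

lemma posSemidef_doublingMatrix_circlePoint (θ : ℝ) :
    (doublingMatrix (circlePoint θ) (circlePoint (2 * θ))).PosSemidef := by
  rw [doublingMatrix_circlePoint]
  exact posSemidef_vecMulVec_self_star _

lemma doublingMatrix_convexCombination {s t : ℝ} (hst : s + t = 1) (p p' q q' : ℝ × ℝ) :
    doublingMatrix (s • p + t • p') (s • q + t • q') =
      s • doublingMatrix p q + t • doublingMatrix p' q' := by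
  obtain rfl : t = 1 - s := by linarith
  ext i j
  fin_cases i <;> fin_cases j <;> simp [doublingMatrix] <;> ring

lemma dotProduct_doublingMatrix_mulVec (p q : ℝ × ℝ) (u v w : ℝ) :
    ![u, v, w] ⬝ᵥ doublingMatrix p q *ᵥ ![u, v, w] =
      u ^ 2 + 2 * u * (v * p.1 + w * p.2) +
        (v ^ 2 * (1 + q.1) + 2 * v * w * q.2 + w ^ 2 * (1 - q.1)) / 2 := by
  simp only [doublingMatrix, mulVec, dotProduct, Fin.sum_univ_three, of_apply, Matrix.cons_val]
  ring

lemma sq_coordAlong_le {p q : ℝ × ℝ} (h : (doublingMatrix p q).PosSemidef) (φ : ℝ) :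
    coordAlong φ p ^ 2 ≤ (1 + coordAlong (2 * φ) q) / 2 := by
  have hform := h.dotProduct_mulVec_nonneg ![-coordAlong φ p, cos φ, sin φ]
  rw [star_trivial, dotProduct_doublingMatrix_mulVec] at hform
  simp only [coordAlong, cos_two_mul', sin_two_mul] at hform ⊢
  linear_combination hform + sin_sq_add_cos_sq φ / 2

lemma coordAlong_le_cos_of_double {p q : ℝ × ℝ} {φ ψ : ℝ} (h : (doublingMatrix p q).PosSemidef)
    (hψ : 0 ≤ cos ψ) (hq : coordAlong (2 * φ) q ≤ cos (2 * ψ)) : coordAlong φ p ≤ cos ψ := by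
  rw [cos_two_mul] at hq
  exact le_of_sq_le_sq (by linarith [sq_coordAlong_le h φ]) hψ

/-- The points `p` related to some point of `C` by a positive semidefinite `doublingMatrix`; this
turns a regular `N`-gon into a regular `2N`-gon. -/
def psdDoubling (C : Set (ℝ × ℝ)) : Set (ℝ × ℝ) :=
  {p | ∃ q ∈ C, (doublingMatrix p q).PosSemidef}

lemma convex_psdDoubling {C : Set (ℝ × ℝ)} (hC : Convex ℝ C) : Convex ℝ (psdDoubling C) := by
  rintro p ⟨q, hq, hpq⟩ p' ⟨q', hq', hpq'⟩ s t hs ht hst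
  refine ⟨s • q + t • q', hC hq hq' hs ht hst, ?_⟩
  rw [doublingMatrix_convexCombination hst]
  exact (hpq.smul hs).add (hpq'.smul ht)

lemma regularPolygonVertices_subset_psdDoubling (N : ℕ) :
    regularPolygonVertices (2 * N) ⊆ psdDoubling (regularPolygonVertices N) := by
  rintro _ ⟨i, rfl⟩
  refine ⟨_, ⟨i, rfl⟩, ?_⟩
  convert posSemidef_doublingMatrix_circlePoint ((2 * i - 1) * π / (2 * N : ℕ)) using 3
  push_cast
  ring

lemma psdDoubling_mono {C D : Set (ℝ × ℝ)} (h : C ⊆ D) : psdDoubling C ⊆ psdDoubling D :=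
  fun _ ⟨q, hq, hpq⟩ => ⟨q, h hq, hpq⟩

lemma psdDoubling_facetRegion_subset {N : ℕ} (hN : 0 < N) :
    psdDoubling (facetRegion N) ⊆ facetRegion (2 * N) := by
  rintro p ⟨q, hq, hpq⟩ j
  have hle : π / (2 * N : ℕ) ≤ π / 2 := by
    have : (2 : ℝ) ≤ (2 * N : ℕ) := mod_cast (by omega : 2 ≤ 2 * N)
    gcongr
  have hcos : 0 ≤ cos (π / (2 * N : ℕ)) :=
    cos_nonneg_of_neg_pi_div_two_le_of_le
      ((neg_nonpos.2 pi_div_two_pos.le).trans (by positivity)) hle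
  refine coordAlong_le_cos_of_double hpq hcos ?_
  convert hq j using 2 <;> (push_cast; ring)

theorem facetRegion_two_mul {N : ℕ} (hN : 2 ≤ N) :
    facetRegion (2 * N) = psdDoubling (facetRegion N) := by
  refine Set.Subset.antisymm ?_ (psdDoubling_facetRegion_subset (by omega))
  rw [← convexHull_regularPolygonVertices (by omega : 3 ≤ 2 * N)]
  refine convexHull_min ?_ (convex_psdDoubling (convex_facetRegion N))
  exact (regularPolygonVertices_subset_psdDoubling N).trans
    (psdDoubling_mono (regularPolygonVertices_subset_facetRegion (by omega)))

lemma facetRegion_two_pow_mul {N : ℕ} (hN : 2 ≤ N) (m : ℕ) :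
    facetRegion (2 ^ m * N) = psdDoubling^[m] (facetRegion N) := by
  induction m with
  | zero => simp
  | succ m ih =>
    have hle : 2 ≤ 2 ^ m * N := hN.trans (Nat.le_mul_of_pos_left N (by positivity))
    rw [pow_succ', mul_assoc, facetRegion_two_mul hle, ih, Function.iterate_succ_apply']

lemma mem_iterate_psdDoubling {C : Set (ℝ × ℝ)} {m : ℕ} {p : ℝ × ℝ} :
    p ∈ psdDoubling^[m] C ↔ ∃ z : ℕ → ℝ × ℝ, z 0 = p ∧
      (∀ k < m, (doublingMatrix (z k) (z (k + 1))).PosSemidef) ∧ z m ∈ C := by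
  induction m generalizing p with
  | zero => exact ⟨fun hp => ⟨fun _ => p, rfl, by simp, hp⟩, fun ⟨_, hz, _, hC⟩ => hz ▸ hC⟩
  | succ m ih =>
    rw [Function.iterate_succ_apply']
    constructor
    · rintro ⟨q, hq, hpq⟩
      obtain ⟨z, rfl, hz, hC⟩ := ih.1 hq
      refine ⟨fun k => k.casesOn p z, rfl, fun k hk => ?_, hC⟩
      cases k with
      | zero => exact hpq
      | succ k => exact hz k (by omega)
    · rintro ⟨z, rfl, hz, hC⟩
      exact ⟨z 1, ih.2 ⟨fun k => z (k + 1), rfl, fun k hk => hz (k + 1) (by omega), hC⟩,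
        hz 0 (by omega)⟩

theorem psd_lift_pow_two_gon_general {N m : ℕ} (hN : 2 ≤ N) (hm : 3 ≤ 2 ^ m * N) :
    convexHull ℝ (regularPolygonVertices (2 ^ m * N)) =
      {p | ∃ z : ℕ → ℝ × ℝ, z 0 = p ∧
        (∀ k < m, (doublingMatrix (z k) (z (k + 1))).PosSemidef) ∧ z m ∈ facetRegion N} := by
  rw [convexHull_regularPolygonVertices hm, facetRegion_two_pow_mul hN]
  exact Set.ext fun p => mem_iterate_psdDoubling

-- The coordinate `x (m + 1)` is free on the right-hand side, so the chain replaces it by `0`.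
lemma exists_chain_iff_exists_coords (m : ℕ) (p : ℝ × ℝ) :
    (∃ z : ℕ → ℝ × ℝ, z 0 = p ∧
      (∀ k < m + 1, (doublingMatrix (z k) (z (k + 1))).PosSemidef) ∧ (z (m + 1)).1 = 0) ↔
    ∃ x y : ℕ → ℝ, x 0 = p.1 ∧ y 0 = p.2 ∧
      (∀ k ∈ Finset.Icc 1 m,
        (doublingMatrix (x (k - 1), y (k - 1)) (x k, y k)).PosSemidef) ∧
      (doublingMatrix (x m, y m) (0, y (m + 1))).PosSemidef := by
  constructor
  · rintro ⟨z, rfl, hz, hlast⟩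
    refine ⟨fun k => (z k).1, fun k => (z k).2, rfl, rfl, fun k hk => ?_, ?_⟩
    · obtain ⟨hk1, hkm⟩ := Finset.mem_Icc.1 hk
      simpa only [Nat.sub_add_cancel hk1] using hz (k - 1) (by omega)
    · simpa only [← hlast] using hz m (by omega)
  · rintro ⟨x, y, hx, hy, hchain, hlast⟩
    refine ⟨fun k => (if k = m + 1 then 0 else x k, y k), by simp [hx, hy], fun k hk => ?_,
      by simp⟩
    rcases Nat.lt_succ_iff_lt_or_eq.1 hk with hlt | rfl
    · simpa [hlt.ne, hk.ne] using hchain (k + 1) (Finset.mem_Icc.2 (by omega))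
    · simpa using hlast

/-- The regular `2ⁿ`-gon is the projection of a product of `n−1` slices of the `3×3`
psd cone: an equivariant `(S³₊)^{n−1}` lift of the regular `2ⁿ`-gon. -/
theorem psd_lift_pow_two_gon (n : ℕ) (hn : 2 ≤ n) :
    convexHull ℝ
        {p : ℝ × ℝ | ∃ i ∈ Finset.Icc (1:ℕ) (2 ^ n),
          p = (Real.cos ((2 * (i : ℝ) - 1) * π / 2 ^ n),
               Real.sin ((2 * (i : ℝ) - 1) * π / 2 ^ n))} =
      {p : ℝ × ℝ | ∃ x y : ℕ → ℝ, x 0 = p.1 ∧ y 0 = p.2 ∧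
        (∀ k ∈ Finset.Icc 1 (n - 2),
          (!![1, x (k - 1), y (k - 1);
              x (k - 1), (1 + x k) / 2, y k / 2;
              y (k - 1), y k / 2, (1 - x k) / 2] : Matrix (Fin 3) (Fin 3) ℝ).PosSemidef) ∧
        (!![1, x (n - 2), y (n - 2);
            x (n - 2), 1 / 2, y (n - 1) / 2;
            y (n - 2), y (n - 1) / 2, 1 / 2] : Matrix (Fin 3) (Fin 3) ℝ).PosSemidef} := by
  obtain ⟨m, rfl⟩ := Nat.exists_eq_add_of_le' hn
  have hthree : 3 ≤ 2 ^ (m + 1) * 2 := by linarith [Nat.one_le_two_pow (n := m), pow_succ 2 m]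
  rw [← regularPolygonVertices_two_pow, pow_succ, psd_lift_pow_two_gon_general le_rfl hthree,
    facetRegion_two]
  exact Set.ext fun p => by simpa [doublingMatrix] using exists_chain_iff_exists_coords m p
end

section
/- Let k be a positive even integer and let 0 = a₀ < a₁ < … < a_{k−1} be real numbers. Let q(x) = Π_{i=0}^{k−1} (x − a_i) be the monic polynomial of degree k vanishing at the a_i. Then the following are equivalent: (i) there exists a real polynomial p of degree exactly k with p(a_i) = a_i for all i = 0, …, k−1 and p(x) ≥ 0 for all x ∈ ℝ; (ii) q(x) ≥ q'(0)·x for all x ∈ ℝ, where q' is the derivative of q. -/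
open Polynomial Finset

/-!
A polynomial of degree at most `k` which agrees with `X` at the `k` nodes has the form `X + c q`.
If it is nonnegative, then its zero at the node `0` is a minimum, so its derivative `1 + c q'(0)`
vanishes there and `c = -1 / q'(0)` is forced. Now `q'(0)` is the product of the `-aᵢ` over the
nonzero nodes, which is negative when an odd number of nodes are positive, and so `X - q / q'(0)`
is nonnegative exactly when `q` lies above its tangent line at `0`.
-/

lemma prod_neg_of_odd_card_filter_neg {ι R : Type*} [CommRing R] [LinearOrder R]
    [IsStrictOrderedRing R] {s : Finset ι} {f : ι → R} (hf : ∀ i ∈ s, f i ≠ 0)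
    (hodd : Odd #{i ∈ s | f i < 0}) : ∏ i ∈ s, f i < 0 := by
  have hneg : ∏ i ∈ s with f i < 0, f i < 0 := by
    have hpos : 0 < ∏ i ∈ s with f i < 0, -f i :=
      prod_pos fun i hi ↦ neg_pos.mpr (mem_filter.mp hi).2
    rwa [prod_neg, hodd.neg_one_pow, neg_one_mul, neg_pos] at hpos
  have hpos : 0 < ∏ i ∈ s with ¬f i < 0, f i := prod_pos fun i hi ↦ by
    obtain ⟨his, hi_nonneg⟩ := mem_filter.mp hi
    exact (not_lt.mp hi_nonneg).lt_of_ne' (hf i his)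
  rw [← prod_filter_mul_prod_filter_not s (f · < 0)]
  exact mul_neg_of_neg_of_pos hneg hpos

lemma card_filter_lt_range_of_strictMonoOn {α : Type*} [LinearOrder α] {k : ℕ} {a : ℕ → α}
    (ha : StrictMonoOn a (range k)) : #{j ∈ range k | a 0 < a j} = k - 1 := by
  have hfilter : {j ∈ range k | a 0 < a j} = (range k).erase 0 := by
    ext j
    simp only [mem_filter, mem_erase, and_comm (a := j ≠ 0), and_congr_right_iff]
    intro hj
    have h0 : 0 ∈ range k := mem_range.mpr (j.zero_le.trans_lt (mem_range.mp hj))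
    rw [ha.lt_iff_lt h0 hj, Nat.pos_iff_ne_zero]
  rcases k.eq_zero_or_pos with rfl | hk
  · rfl
  · rw [hfilter, card_erase_of_mem (mem_range.mpr hk), card_range]

section Nodal

variable {ι R : Type*} [CommRing R] {s : Finset ι} {v : ι → R}

lemma eq_C_mul_nodal_of_eval_eq_zero [IsDomain R] {f : R[X]} (hv : Set.InjOn v s)
    (hdeg : f.natDegree ≤ #s) (hf : ∀ i ∈ s, f.eval (v i) = 0) :
    f = C (f.coeff #s) * Lagrange.nodal s v := by
  refine eq_of_degree_sub_lt_of_eval_index_eq s hv ?_ fun i hi ↦ by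
    simp [hf i hi, Lagrange.eval_nodal_at_node hi]
  have hlead : (Lagrange.nodal s v).coeff #s = 1 := by
    simpa using (Lagrange.nodal_monic (s := s) (v := v)).coeff_natDegree
  refine (degree_lt_iff_coeff_zero _ _).mpr fun m hm ↦ ?_
  rw [coeff_sub, coeff_C_mul]
  rcases hm.eq_or_lt with rfl | hlt
  · simp [hlead]
  · rw [coeff_eq_zero_of_natDegree_lt (hdeg.trans_lt hlt),
      coeff_eq_zero_of_natDegree_lt (Lagrange.natDegree_nodal.trans_lt hlt), mul_zero, sub_zero]

lemma eval_derivative_nodal_neg [LinearOrder R] [IsStrictOrderedRing R] {i : ι}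
    (hv : Set.InjOn v s) (hi : i ∈ s) (hodd : Odd #{j ∈ s | v i < v j}) :
    (Lagrange.nodal s v).derivative.eval (v i) < 0 := by
  classical
  rw [Lagrange.eval_nodal_derivative_eval_node_eq hi, Lagrange.eval_nodal]
  refine prod_neg_of_odd_card_filter_neg (fun j hj ↦ ?_) ?_
  · obtain ⟨hji, hjs⟩ := mem_erase.mp hj
    exact sub_ne_zero.mpr (hv.ne hi hjs hji.symm)
  · simpa [filter_erase] using hodd

end Nodal

lemma derivative_eval_eq_zero_of_nonneg {p : ℝ[X]} {x : ℝ} (hp : ∀ y, 0 ≤ p.eval y)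
    (hx : p.eval x = 0) : p.derivative.eval x = 0 :=
  IsLocalMin.hasDerivAt_eq_zero (.of_forall fun y ↦ hx.trans_le (hp y)) (p.hasDerivAt x)

lemma eq_neg_inv_of_nonneg_X_add_C_mul {q : ℝ[X]} {c : ℝ} (hq : q.eval 0 = 0)
    (hnonneg : ∀ x, 0 ≤ (X + C c * q).eval x) : c = -(q.derivative.eval 0)⁻¹ := by
  have hcrit : 1 + c * q.derivative.eval 0 = 0 := by
    simpa using derivative_eval_eq_zero_of_nonneg hnonneg (by simp [hq])
  rw [← inv_neg]
  exact eq_inv_of_mul_eq_one_left (by linear_combination -hcrit)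

lemma eval_X_add_C_neg_inv_mul_nonneg_iff {K : Type*} [Field K] [LinearOrder K]
    [IsStrictOrderedRing K] {d : K} (hd : d < 0) (q : K[X]) (x : K) :
    0 ≤ (X + C (-d⁻¹) * q).eval x ↔ d * x ≤ q.eval x := by
  have heval : (X + C (-d⁻¹) * q).eval x = (-d)⁻¹ * (q.eval x - d * x) := by
    simp only [eval_add, eval_X, eval_mul, eval_C]
    field_simp [hd.ne]
    ring
  rw [heval, mul_nonneg_iff_of_pos_left (inv_pos.mpr (neg_pos.mpr hd)), sub_nonneg]

lemma natDegree_X_add_C_mul {R : Type*} [Semiring R] [NoZeroDivisors R] {q : R[X]} {c : R}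
    (hc : c ≠ 0) (hq : 1 < q.natDegree) : (X + C c * q).natDegree = q.natDegree := by
  rw [natDegree_add_eq_right_of_natDegree_lt, natDegree_C_mul hc]
  exact natDegree_X_le.trans_lt (by rwa [natDegree_C_mul hc])

theorem nonneg_interp_iff_tangent_general {ι : Type*} {s : Finset ι} {v : ι → ℝ} {i : ι}
    (hv : Set.InjOn v s) (hi : i ∈ s) (hvi : v i = 0) (hodd : Odd #{j ∈ s | 0 < v j}) :
    (∃ p : ℝ[X], p.natDegree = #s ∧ (∀ j ∈ s, p.eval (v j) = v j) ∧ ∀ x, 0 ≤ p.eval x) ↔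
      ∀ x, (Lagrange.nodal s v).derivative.eval 0 * x ≤ (Lagrange.nodal s v).eval x := by
  set q := Lagrange.nodal s v with hq
  have hneg : q.derivative.eval 0 < 0 := by
    simpa only [hvi] using eval_derivative_nodal_neg hv hi (by rwa [hvi])
  have hcard : 1 < #s := by
    obtain ⟨j, hj⟩ := card_pos.mp hodd.pos
    obtain ⟨hjs, hj_pos⟩ := mem_filter.mp hj
    exact one_lt_card.mpr ⟨i, hi, j, hjs, fun hij ↦ hj_pos.ne' (hij ▸ hvi)⟩
  simp only [← eval_X_add_C_neg_inv_mul_nonneg_iff hneg]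
  constructor
  · rintro ⟨p, hdeg, hinterp, hnonneg⟩
    have hsub : p - X = C ((p - X).coeff #s) * q :=
      eq_C_mul_nodal_of_eval_eq_zero hv
        ((natDegree_sub_le _ _).trans (by simp [hdeg, hcard.le]))
        fun j hj ↦ by simp [hinterp j hj]
    rw [eq_add_of_sub_eq' hsub] at hnonneg
    have hq0 : q.eval 0 = 0 := by
      simpa only [hvi] using Lagrange.eval_nodal_at_node (v := v) hi
    rwa [eq_neg_inv_of_nonneg_X_add_C_mul hq0 hnonneg] at hnonneg
  · refine fun hnonneg ↦ ⟨_, ?_, fun j hj ↦ ?_, hnonneg⟩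
    · rw [natDegree_X_add_C_mul (neg_ne_zero.mpr (inv_ne_zero hneg.ne)) (by simpa [hq]), hq,
        Lagrange.natDegree_nodal]
    · simp [hq, Lagrange.eval_nodal_at_node hj]

/-- Characterization of sequences `0 = a₀ < a₁ < … < a_{k−1}` with nonnegative
interpolation degree `k`: a globally nonnegative interpolant of degree exactly `k`
exists iff the monic polynomial `q` vanishing at the `aᵢ` lies above its tangent
line at `x = 0`. -/
theorem nonneg_interp_iff_tangent (k : ℕ) (hk : 0 < k) (hke : Even k)
    (a : ℕ → ℝ) (ha0 : a 0 = 0)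
    (hmono : ∀ i j, i < j → j < k → a i < a j)
    (q : Polynomial ℝ) (hq : q = ∏ i ∈ Finset.range k, (X - C (a i))) :
    (∃ p : Polynomial ℝ, p.natDegree = k ∧ (∀ i < k, p.eval (a i) = a i) ∧
        ∀ x : ℝ, 0 ≤ p.eval x) ↔
      ∀ x : ℝ, (q.derivative.eval 0) * x ≤ q.eval x := by
  have ha : StrictMonoOn a (range k) :=
    fun i _ j hj hij ↦ hmono i j hij (mem_range.mp hj)
  have hodd : Odd #{j ∈ range k | 0 < a j} := by
    rw [← ha0, card_filter_lt_range_of_strictMonoOn ha]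
    exact Nat.Even.sub_odd hk hke odd_one
  rw [hq, ← Lagrange.nodal_eq]
  simpa using nonneg_interp_iff_tangent_general ha.injOn (mem_range.mpr hk) ha0 hodd
end

section
/- Let k be a positive even integer and let 0 = a₀ < a₁ < … < a_{k−1} be real numbers that form a subadditive sequence, i.e., a_{i+j} ≤ a_i + a_j for all indices i, j ≥ 0 with i + j ≤ k−1. Then there exists a globally nonnegative real polynomial p of degree k such that p(a_i) = a_i for all i = 0, …, k−1; that is, the sequence (a₀, …, a_{k−1}) has nonnegative interpolation degree k. -/
open Polynomial Finset

/-!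
The interpolant is `p(x) = x (1 - ∏_{1 ≤ i < k} (1 - x / aᵢ))`. It is the only possible choice:
a degree `k` interpolant is `x + c ∏_{i < k} (x - aᵢ)`, and nonnegativity forces `p'(0) = 0`
because `p(0) = 0`, which determines `c`.

For `x ≤ 0` all factors of the product are at least `1`, so `p(x) ≥ 0`. For `x ≥ 0` the product has
to be at most `1`. Beyond `a_{k-1}` it consists of an odd number of nonpositive factors. Otherwise
let `j` be the first index with `x ≤ a_j`. The factors with `i ≥ j` lie in `[0, 1]`, and for
`1 ≤ i < j` subadditivity gives `x - aᵢ ≤ a_j - aᵢ ≤ a_{j-i}`, so that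
`∏_{i < j} (x - aᵢ) ≤ ∏_{i < j} a_{j-i} = ∏_{i < j} aᵢ`.
-/

section IdentityInterpolant

variable {ι K : Type*} [Field K]

theorem natDegree_one_sub_C_mul_X {c : K} (hc : c ≠ 0) : (1 - C c * X : K[X]).natDegree = 1 := by
  rw [natDegree_sub_eq_right_of_natDegree_lt] <;> simp [natDegree_C_mul_X c hc]

theorem natDegree_prod_one_sub_C_mul_X {s : Finset ι} {c : ι → K} (hc : ∀ i ∈ s, c i ≠ 0) :
    (∏ i ∈ s, (1 - C (c i) * X)).natDegree = #s := by
  have degree_factor : ∀ i ∈ s, (1 - C (c i) * X).natDegree = 1 :=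
    fun i hi => natDegree_one_sub_C_mul_X (hc i hi)
  have factor_ne_zero : ∀ i ∈ s, 1 - C (c i) * X ≠ 0 :=
    fun i hi => ne_zero_of_natDegree_gt (n := 0) (by simp [degree_factor i hi])
  rw [natDegree_prod _ _ factor_ne_zero, sum_congr rfl degree_factor, card_eq_sum_ones]

/-- The polynomial `x (1 - ∏ i ∈ s, (1 - x / b i))`, which interpolates the identity at `0` and at
the nodes `b i`, and has a double zero at `0`. Division by the nodes is encoded as multiplication
by the constants `(b i)⁻¹`, so a node `b i = 0` contributes the trivial factor `1`. -/
noncomputable def identityInterpolant (s : Finset ι) (b : ι → K) : K[X] :=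
  X * (1 - ∏ i ∈ s, (1 - C (b i)⁻¹ * X))

namespace identityInterpolant

variable {s : Finset ι} {b : ι → K}

theorem eval_eq (s : Finset ι) (b : ι → K) (x : K) :
    (identityInterpolant s b).eval x = x * (1 - ∏ i ∈ s, (1 - x / b i)) := by
  simp [identityInterpolant, eval_prod, div_eq_inv_mul]

theorem eval_zero (s : Finset ι) (b : ι → K) : (identityInterpolant s b).eval 0 = 0 := by
  rw [eval_eq, zero_mul]

theorem eval_node {i : ι} (hi : i ∈ s) : (identityInterpolant s b).eval (b i) = b i := by
  rcases eq_or_ne (b i) 0 with hb | hb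
  · rw [hb, eval_zero]
  · have factor_eq_zero : 1 - b i / b i = 0 := by rw [div_self hb, sub_self]
    rw [eval_eq, prod_eq_zero hi factor_eq_zero, sub_zero, mul_one]

theorem natDegree_eq (hs : s.Nonempty) (hb : ∀ i ∈ s, b i ≠ 0) :
    (identityInterpolant s b).natDegree = #s + 1 := by
  have degree_prod := natDegree_prod_one_sub_C_mul_X fun i hi => inv_ne_zero (hb i hi)
  have degree_one_sub_prod : (1 - ∏ i ∈ s, (1 - C (b i)⁻¹ * X)).natDegree = #s := by
    rw [natDegree_sub_eq_right_of_natDegree_lt, degree_prod]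
    rw [degree_prod, natDegree_one]
    exact hs.card_pos
  have one_sub_prod_ne_zero : 1 - ∏ i ∈ s, (1 - C (b i)⁻¹ * X) ≠ 0 :=
    ne_zero_of_natDegree_gt (degree_one_sub_prod ▸ hs.card_pos)
  rw [identityInterpolant, natDegree_X_mul one_sub_prod_ne_zero, degree_one_sub_prod]

end identityInterpolant

end IdentityInterpolant

section ProdOneSubDiv

variable {ι K : Type*} [Field K] [LinearOrder K] [IsStrictOrderedRing K]
  {s : Finset ι} {b : ι → K} {x : K}

theorem one_le_prod_one_sub_div (hb : ∀ i ∈ s, 0 ≤ b i) (hx : x ≤ 0) :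
    1 ≤ ∏ i ∈ s, (1 - x / b i) :=
  one_le_prod fun i hi => (le_sub_self_iff 1).mpr (div_nonpos_of_nonpos_of_nonneg hx (hb i hi))

theorem prod_one_sub_div_nonpos (hs : Odd #s) (hb : ∀ i ∈ s, 0 < b i) (hx : ∀ i ∈ s, b i ≤ x) :
    ∏ i ∈ s, (1 - x / b i) ≤ 0 := by
  have prod_sub_one_nonneg : 0 ≤ ∏ i ∈ s, (x / b i - 1) :=
    prod_nonneg fun i hi => sub_nonneg.mpr ((one_le_div (hb i hi)).mpr (hx i hi))
  calc ∏ i ∈ s, (1 - x / b i) = ∏ i ∈ s, -(x / b i - 1) := by simp only [neg_sub]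
    _ = -∏ i ∈ s, (x / b i - 1) := by rw [prod_neg, hs.neg_one_pow, neg_one_mul]
    _ ≤ 0 := neg_nonpos.mpr prod_sub_one_nonneg

theorem abs_prod_one_sub_div_le_one (hx₀ : 0 ≤ x) (hx : ∀ i ∈ s, x ≤ b i) :
    |∏ i ∈ s, (1 - x / b i)| ≤ 1 := by
  rw [abs_prod]
  refine prod_le_one (fun _ _ => abs_nonneg _) fun i hi => ?_
  have ratio_nonneg : 0 ≤ x / b i := div_nonneg hx₀ (hx₀.trans (hx i hi))
  have ratio_le_one : x / b i ≤ 1 := div_le_one_of_le₀ (hx i hi) (hx₀.trans (hx i hi))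
  rw [abs_of_nonneg (sub_nonneg.mpr ratio_le_one)]
  exact sub_le_self 1 ratio_nonneg

theorem abs_prod_one_sub_div_eq (hb : ∀ i ∈ s, 0 < b i) (hx : ∀ i ∈ s, b i ≤ x) :
    |∏ i ∈ s, (1 - x / b i)| = (∏ i ∈ s, (x - b i)) / ∏ i ∈ s, b i := by
  rw [abs_prod, ← prod_div_distrib]
  refine prod_congr rfl fun i hi => ?_
  rw [one_sub_div (hb i hi).ne', abs_div, abs_of_pos (hb i hi), abs_sub_comm,
    abs_of_nonneg (sub_nonneg.mpr (hx i hi))]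

theorem identityInterpolant.eval_nonneg (hb : ∀ i ∈ s, 0 ≤ b i)
    (hprod : 0 ≤ x → ∏ i ∈ s, (1 - x / b i) ≤ 1) : 0 ≤ (identityInterpolant s b).eval x := by
  rw [identityInterpolant.eval_eq]
  rcases le_total 0 x with hx | hx
  · exact mul_nonneg hx (sub_nonneg.mpr (hprod hx))
  · exact mul_nonneg_of_nonpos_of_nonpos hx (sub_nonpos.mpr (one_le_prod_one_sub_div hb hx))

end ProdOneSubDiv

theorem forall_lt_or_exists_first_le {α : Type*} [LinearOrder α] (a : ℕ → α) (k : ℕ) (x : α) :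
    (∀ i ∈ Ico 1 k, a i < x) ∨ ∃ j ∈ Ico 1 k, x ≤ a j ∧ ∀ i ∈ Ico 1 j, a i < x := by
  classical
  by_cases h : ∃ j, j ∈ Ico 1 k ∧ x ≤ a j
  · obtain ⟨j, ⟨hj, hxj⟩, hmin⟩ := Nat.findX h
    refine .inr ⟨j, hj, hxj, fun i hi => lt_of_not_ge fun hxi => hmin i (mem_Ico.mp hi).2 ⟨?_, hxi⟩⟩
    exact Ico_subset_Ico_right (mem_Ico.mp hj).2.le hi
  · push Not at h
    exact .inl h

section Subadditive

variable {K : Type*} [Field K] [LinearOrder K] [IsStrictOrderedRing K] {a : ℕ → K} {x : K}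

theorem prod_sub_le_prod_of_subadditive {j : ℕ} (hsub : ∀ i ∈ Ico 1 j, a j ≤ a i + a (j - i))
    (hax : ∀ i ∈ Ico 1 j, a i ≤ x) (hxj : x ≤ a j) :
    ∏ i ∈ Ico 1 j, (x - a i) ≤ ∏ i ∈ Ico 1 j, a i :=
  calc ∏ i ∈ Ico 1 j, (x - a i) ≤ ∏ i ∈ Ico 1 j, a (j - i) :=
        prod_le_prod (fun i hi => sub_nonneg.mpr (hax i hi)) fun i hi =>
          sub_le_iff_le_add'.mpr (hxj.trans (hsub i hi))
    _ = ∏ i ∈ Ico 1 j, a i := by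
        rw [prod_Ico_reflect a 1 j.le_succ, Nat.add_sub_cancel_left, Nat.add_sub_cancel]

theorem abs_prod_one_sub_div_le_one_of_subadditive {j : ℕ} (hpos : ∀ i ∈ Ico 1 j, 0 < a i)
    (hsub : ∀ i ∈ Ico 1 j, a j ≤ a i + a (j - i)) (hax : ∀ i ∈ Ico 1 j, a i ≤ x) (hxj : x ≤ a j) :
    |∏ i ∈ Ico 1 j, (1 - x / a i)| ≤ 1 := by
  rw [abs_prod_one_sub_div_eq hpos hax, div_le_one (prod_pos hpos)]
  exact prod_sub_le_prod_of_subadditive hsub hax hxj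

theorem prod_one_sub_div_le_one_of_subadditive {k : ℕ} (hk : Even k) (hk₀ : 0 < k)
    (hpos : ∀ i ∈ Ico 1 k, 0 < a i) (hmono : MonotoneOn a (Set.Iio k))
    (hsub : ∀ i j, i + j < k → a (i + j) ≤ a i + a j) (hx : 0 ≤ x) :
    ∏ i ∈ Ico 1 k, (1 - x / a i) ≤ 1 := by
  rcases forall_lt_or_exists_first_le a k x with hax | ⟨j, hj, hxj, hax⟩
  · have card_odd : Odd #(Ico 1 k) := by
      rw [Nat.card_Ico]
      exact Nat.Even.sub_odd hk₀ hk odd_one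
    exact (prod_one_sub_div_nonpos card_odd hpos fun i hi => (hax i hi).le).trans zero_le_one
  · obtain ⟨one_le_j, j_lt_k⟩ := mem_Ico.mp hj
    have abs_prod_below_le : |∏ i ∈ Ico 1 j, (1 - x / a i)| ≤ 1 := by
      refine abs_prod_one_sub_div_le_one_of_subadditive
        (fun i hi => hpos i (Ico_subset_Ico_right j_lt_k.le hi)) (fun i hi => ?_)
        (fun i hi => (hax i hi).le) hxj
      have i_add_sub : i + (j - i) = j := Nat.add_sub_of_le (mem_Ico.mp hi).2.le
      simpa only [i_add_sub] using hsub i (j - i) (i_add_sub.trans_lt j_lt_k)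
    have abs_prod_above_le : |∏ i ∈ Ico j k, (1 - x / a i)| ≤ 1 :=
      abs_prod_one_sub_div_le_one hx fun i hi =>
        hxj.trans (hmono j_lt_k (mem_Ico.mp hi).2 (mem_Ico.mp hi).1)
    calc ∏ i ∈ Ico 1 k, (1 - x / a i)
        ≤ |(∏ i ∈ Ico 1 j, (1 - x / a i)) * ∏ i ∈ Ico j k, (1 - x / a i)| := by
          rw [prod_Ico_consecutive _ one_le_j j_lt_k.le]
          exact le_abs_self _
      _ ≤ 1 := by
          rw [abs_mul]
          exact mul_le_one₀ abs_prod_below_le (abs_nonneg _) abs_prod_above_le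

theorem subadditive_nonneg_interp_general {k : ℕ} (hk : 0 < k) (hke : Even k) (ha0 : a 0 = 0)
    (ha1 : 0 < a 1) (hmono : MonotoneOn a (Set.Iio k))
    (hsub : ∀ i j, i + j < k → a (i + j) ≤ a i + a j) :
    ∃ p : K[X], p.natDegree = k ∧ (∀ x, 0 ≤ p.eval x) ∧ ∀ i < k, p.eval (a i) = a i := by
  have one_lt_k : 1 < k := by grind
  have hpos : ∀ i ∈ Ico 1 k, 0 < a i := fun i hi =>
    ha1.trans_le (hmono one_lt_k (mem_Ico.mp hi).2 (mem_Ico.mp hi).1)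
  refine ⟨identityInterpolant (Ico 1 k) a, ?_, fun x => ?_, fun i hi => ?_⟩
  · rw [identityInterpolant.natDegree_eq (nonempty_Ico.mpr one_lt_k) fun i hi => (hpos i hi).ne',
      Nat.card_Ico, Nat.sub_add_cancel hk]
  · exact identityInterpolant.eval_nonneg (fun i hi => (hpos i hi).le)
      (prod_one_sub_div_le_one_of_subadditive hke hk hpos hmono hsub)
  · rcases i.eq_zero_or_pos with rfl | hi₀
    · rw [ha0, identityInterpolant.eval_zero]
    · exact identityInterpolant.eval_node (mem_Ico.mpr ⟨hi₀, hi⟩)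

end Subadditive

/-- A subadditive sequence `0 = a₀ < a₁ < … < a_{k−1}` (with `k` even) has nonnegative
interpolation degree `k`: there is a globally nonnegative polynomial of degree `k`
interpolating the identity at the `aᵢ`. -/
theorem subadditive_nonneg_interp (k : ℕ) (hk : 0 < k) (hke : Even k)
    (a : ℕ → ℝ) (ha0 : a 0 = 0)
    (hmono : ∀ i j, i < j → j < k → a i < a j)
    (hsub : ∀ i j, i + j ≤ k - 1 → a (i + j) ≤ a i + a j) :
    ∃ p : Polynomial ℝ, p.natDegree = k ∧ (∀ x : ℝ, 0 ≤ p.eval x) ∧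
      ∀ i < k, p.eval (a i) = a i := by
  have strictMono : StrictMonoOn a (Set.Iio k) := fun i _ j hj hij => hmono i j hij hj
  exact subadditive_nonneg_interp_general hk hke ha0 (ha0 ▸ hmono 0 1 one_pos (by grind))
    strictMono.monotoneOn fun i j hij => hsub i j (Nat.le_sub_one_of_lt hij)
end

section
/- Let 0 = a₀ < a₁ < a₂ < a₃ be real numbers. There exists a globally nonnegative real polynomial p of degree 4 with p(a_i) = a_i for i = 0, 1, 2, 3 (i.e., the sequence has nonnegative interpolation degree 4) if and only if (a₁ + a₂ + a₃)² ≤ 4(a₁a₂ + a₁a₃ + a₂a₃). -/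
open Polynomial

/-!
A nonnegative polynomial `p` with `p(0) = 0` has a double zero at `0`. A polynomial of degree at
most `n + 1` that has a double zero at `0` and fixes `n` nonzero nodes is unique, hence equal to
`x (1 - ∏ (1 - x / a))`, the product running over the nodes. For nodes `a₁, a₂, a₃` with elementary
symmetric functions `e₁, e₂, e₃` this is `x² (x² - e₁ x + e₂) / e₃`, which is nonnegative exactly
when the quadratic factor has nonpositive discriminant.
-/

theorem eq_of_X_pow_dvd_sub_of_eval_finset_eq {R : Type*} [CommRing R] [IsDomain R] {p q : R[X]}
    {s : Finset R} {k : ℕ} (hs : 0 ∉ s) (hdvd : X ^ k ∣ p - q)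
    (hdeg : (p - q).degree < s.card + k)
    (heval : ∀ a ∈ s, p.eval a = q.eval a) : p = q := by
  obtain ⟨r, hr⟩ := hdvd
  suffices r = 0 by rwa [this, mul_zero, sub_eq_zero] at hr
  refine eq_zero_of_degree_lt_of_eval_finset_eq_zero s ?_ fun a ha => ?_
  · rw [hr, degree_mul, degree_X_pow, add_comm] at hdeg
    exact lt_of_add_lt_add_right hdeg
  · have hmul : a ^ k * r.eval a = 0 := by
      simpa [heval a ha] using (congrArg (eval a) hr).symm
    exact (mul_eq_zero.1 hmul).resolve_left (pow_ne_zero k (ne_of_mem_of_not_mem ha hs))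

section Field

variable {K : Type*} [Field K]

/-- The Hermite interpolant of the identity at the nonzero nodes `s` which moreover vanishes to
second order at `0`. The normalisation `1 - x / a` of the linear factors, rather than `x - a`, is
what makes the linear term cancel. -/
noncomputable def doubleZeroInterpolant (s : Finset K) : K[X] :=
  X * (1 - ∏ a ∈ s, (1 - C a⁻¹ * X))

theorem eval_doubleZeroInterpolant (s : Finset K) (x : K) :
    (doubleZeroInterpolant s).eval x = x * (1 - ∏ a ∈ s, (1 - a⁻¹ * x)) := by
  simp [doubleZeroInterpolant, eval_prod]

theorem eval_doubleZeroInterpolant_of_mem {s : Finset K} (hs : 0 ∉ s) {a : K} (ha : a ∈ s) :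
    (doubleZeroInterpolant s).eval a = a := by
  have hprod : ∏ b ∈ s, (1 - b⁻¹ * a) = 0 :=
    Finset.prod_eq_zero ha (by rw [inv_mul_cancel₀ (ne_of_mem_of_not_mem ha hs), sub_self])
  rw [eval_doubleZeroInterpolant, hprod, sub_zero, mul_one]

theorem X_sq_dvd_doubleZeroInterpolant (s : Finset K) : X ^ 2 ∣ doubleZeroInterpolant s := by
  rw [sq]
  refine mul_dvd_mul_left X (X_dvd_iff.2 ?_)
  simp [coeff_zero_eq_eval_zero, eval_prod]

theorem natDegree_doubleZeroInterpolant {s : Finset K} (hs : 0 ∉ s) (hne : s.Nonempty) :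
    (doubleZeroInterpolant s).natDegree = s.card + 1 := by
  have hlinear : ∀ a ∈ s, (1 - C a⁻¹ * X).natDegree = 1 := fun a ha => by
    have := ne_of_mem_of_not_mem ha hs
    compute_degree!
  have hprod : (∏ a ∈ s, (1 - C a⁻¹ * X)).natDegree = s.card := by
    rw [natDegree_prod _ _ fun a ha => ne_zero_of_natDegree_gt (hlinear a ha).ge,
      Finset.sum_congr rfl hlinear, Finset.sum_const, smul_eq_mul, mul_one]
  have hsub : (1 - ∏ a ∈ s, (1 - C a⁻¹ * X)).natDegree = s.card := by
    rw [natDegree_sub_eq_right_of_natDegree_lt, hprod]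
    rw [hprod, natDegree_one]
    exact hne.card_pos
  rw [doubleZeroInterpolant, natDegree_X_mul, hsub]
  exact ne_zero_of_natDegree_gt (hne.card_pos.trans_eq hsub.symm)

theorem natDegree_doubleZeroInterpolant_le {s : Finset K} (hs : 0 ∉ s) :
    (doubleZeroInterpolant s).natDegree ≤ s.card + 1 := by
  rcases s.eq_empty_or_nonempty with rfl | hne
  · simp [doubleZeroInterpolant]
  · exact (natDegree_doubleZeroInterpolant hs hne).le

theorem eq_doubleZeroInterpolant {p : K[X]} {s : Finset K} (hs : 0 ∉ s)
    (hdeg : p.natDegree ≤ s.card + 1) (hdvd : X ^ 2 ∣ p) (heval : ∀ a ∈ s, p.eval a = a) :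
    p = doubleZeroInterpolant s := by
  refine eq_of_X_pow_dvd_sub_of_eval_finset_eq hs
    (dvd_sub hdvd (X_sq_dvd_doubleZeroInterpolant s)) ?_ fun a ha => ?_
  · have hsub : (p - doubleZeroInterpolant s).natDegree ≤ s.card + 1 :=
      (natDegree_sub_le _ _).trans (max_le hdeg (natDegree_doubleZeroInterpolant_le hs))
    exact (natDegree_le_iff_degree_le.1 hsub).trans_lt (by norm_cast; lia)
  · rw [heval a ha, eval_doubleZeroInterpolant_of_mem hs ha]

theorem eval_doubleZeroInterpolant_triple [DecidableEq K] {a b c : K} (ha : a ≠ 0) (hb : b ≠ 0)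
    (hc : c ≠ 0) (hab : a ≠ b) (hac : a ≠ c) (hbc : b ≠ c) (x : K) :
    (doubleZeroInterpolant {a, b, c}).eval x =
      (a * b * c)⁻¹ * (x ^ 2 * (x ^ 2 - (a + b + c) * x + (a * b + a * c + b * c))) := by
  rw [eval_doubleZeroInterpolant, Finset.prod_insert (by simp [hab, hac]), Finset.prod_pair hbc]
  field_simp
  ring

end Field

section LinearOrderedField

variable {K : Type*} [Field K] [LinearOrder K] [IsStrictOrderedRing K]

theorem X_sub_C_sq_dvd_of_isRoot_of_nonneg {p : K[X]} {c : K} (hroot : p.IsRoot c)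
    (hp : ∀ x, 0 ≤ p.eval x) : (X - C c) ^ 2 ∣ p := by
  let : TopologicalSpace K := Preorder.topology K
  have : OrderTopology K := ⟨rfl⟩
  obtain ⟨q, rfl⟩ := dvd_iff_isRoot.2 hroot
  have hmul (x : K) : 0 ≤ (x - c) * q.eval x := by simpa using hp x
  have hright : 0 ≤ q.eval c :=
    ge_of_tendsto (q.continuous.continuousWithinAt (s := Set.Ioi c)) <|
      eventually_mem_nhdsWithin.mono fun x hx => nonneg_of_mul_nonneg_right (hmul x) (sub_pos.2 hx)
  have hleft : q.eval c ≤ 0 :=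
    le_of_tendsto (q.continuous.continuousWithinAt (s := Set.Iio c)) <|
      eventually_mem_nhdsWithin.mono fun x hx => nonpos_of_mul_nonneg_right (hmul x) (sub_neg.2 hx)
  rw [sq]
  exact mul_dvd_mul_left _ (dvd_iff_isRoot.2 (hleft.antisymm hright))

theorem exists_nonneg_interp_iff_doubleZeroInterpolant_nonneg {s : Finset K} (hs : 0 ∉ s)
    (hne : s.Nonempty) :
    (∃ p : K[X], p.natDegree = s.card + 1 ∧ (∀ x, 0 ≤ p.eval x) ∧
        p.eval 0 = 0 ∧ ∀ a ∈ s, p.eval a = a) ↔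
      ∀ x, 0 ≤ (doubleZeroInterpolant s).eval x := by
  refine ⟨?_, fun hnonneg => ⟨doubleZeroInterpolant s, natDegree_doubleZeroInterpolant hs hne,
    hnonneg, by simp [eval_doubleZeroInterpolant],
    fun a ha => eval_doubleZeroInterpolant_of_mem hs ha⟩⟩
  rintro ⟨p, hdeg, hp, hzero, heval⟩
  have hdvd : X ^ 2 ∣ p := by simpa using X_sub_C_sq_dvd_of_isRoot_of_nonneg hzero hp
  rwa [← eq_doubleZeroInterpolant hs hdeg.le hdvd heval]

theorem sq_mul_quadratic_nonneg_iff {b c : K} (hb : b ≠ 0) :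
    (∀ x, 0 ≤ x ^ 2 * (x ^ 2 - b * x + c)) ↔ b ^ 2 ≤ 4 * c := by
  have hsquare (x : K) : x ^ 2 - b * x + c = (x - b / 2) ^ 2 + (4 * c - b ^ 2) / 4 := by ring
  constructor
  · intro h
    have hvertex : 0 ≤ (b / 2) ^ 2 - b * (b / 2) + c :=
      nonneg_of_mul_nonneg_right (h (b / 2)) (by positivity)
    linarith [hsquare (b / 2)]
  · intro h x
    have := sub_nonneg.2 h
    rw [hsquare]
    positivity

theorem nonneg_interp_deg_four_iff_general (a₁ a₂ a₃ : K)
    (h1 : 0 < a₁) (h2 : a₁ < a₂) (h3 : a₂ < a₃) :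
    (∃ p : K[X], p.natDegree = 4 ∧ (∀ x : K, 0 ≤ p.eval x) ∧
        p.eval 0 = 0 ∧ p.eval a₁ = a₁ ∧ p.eval a₂ = a₂ ∧ p.eval a₃ = a₃) ↔
      (a₁ + a₂ + a₃) ^ 2 ≤ 4 * (a₁ * a₂ + a₁ * a₃ + a₂ * a₃) := by
  have ha₂ : 0 < a₂ := h1.trans h2
  have ha₃ : 0 < a₃ := ha₂.trans h3
  have h13 : a₁ < a₃ := h2.trans h3
  have hs : (0 : K) ∉ ({a₁, a₂, a₃} : Finset K) := by simp [h1.ne, ha₂.ne, ha₃.ne]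
  have hcard : ({a₁, a₂, a₃} : Finset K).card = 3 :=
    Finset.card_eq_three.2 ⟨a₁, a₂, a₃, h2.ne, h13.ne, h3.ne, rfl⟩
  have hexists := exists_nonneg_interp_iff_doubleZeroInterpolant_nonneg hs
    (Finset.insert_nonempty a₁ {a₂, a₃})
  have hprod : 0 < (a₁ * a₂ * a₃)⁻¹ := by positivity
  have hsum : a₁ + a₂ + a₃ ≠ 0 := by positivity
  simpa only [hcard, Finset.forall_mem_insert, Finset.mem_singleton, forall_eq,
    eval_doubleZeroInterpolant_triple h1.ne' ha₂.ne' ha₃.ne' h2.ne h13.ne h3.ne,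
    mul_nonneg_iff_of_pos_left hprod, sq_mul_quadratic_nonneg_iff hsum] using hexists

end LinearOrderedField

/-- A sequence `0 = a₀ < a₁ < a₂ < a₃` has nonnegative interpolation degree `4` if and
only if `(a₁+a₂+a₃)² ≤ 4(a₁a₂+a₁a₃+a₂a₃)`. -/
theorem nonneg_interp_deg_four_iff (a₁ a₂ a₃ : ℝ)
    (h1 : 0 < a₁) (h2 : a₁ < a₂) (h3 : a₂ < a₃) :
    (∃ p : Polynomial ℝ, p.natDegree = 4 ∧ (∀ x : ℝ, 0 ≤ p.eval x) ∧
        p.eval 0 = 0 ∧ p.eval a₁ = a₁ ∧ p.eval a₂ = a₂ ∧ p.eval a₃ = a₃) ↔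
      (a₁ + a₂ + a₃) ^ 2 ≤ 4 * (a₁ * a₂ + a₁ * a₃ + a₂ * a₃) :=
  nonneg_interp_deg_four_iff_general a₁ a₂ a₃ h1 h2 h3
end

section
/- Let k be a positive even integer and let a₀ > a₁ > … > a_{k−1} be real numbers. Let l(x) = c − m·x be a linear function with m > 0 such that l(a₀) = 0 (and hence l(a_i) ≥ 0 for i = 1, …, k−1). Let q(x) = Π_{i=0}^{k−1} (x − a_i). If the curve of q lies above its tangent line at x = a₀, i.e., q(x) ≥ q'(a₀)·(x − a₀) for all x ∈ ℝ, then there exists a real polynomial p of degree k that is globally nonnegative on ℝ and satisfies p(a_i) = l(a_i) for all i = 0, …, k−1. -/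
/-!
With `l(x) = c - m x`, the interpolant is `p = (m / q'(a₀)) (q - t)`, where `t` is the tangent line
of `q` at `a₀`. It is nonnegative since `q ≥ t` and `q'(a₀) = ∏_{i ≥ 1} (a₀ - aᵢ) > 0`. At a root
of `q` only the term `-(m / q'(a₀)) t` survives, and it equals `l` because `l` also vanishes at
`a₀`. Subtracting a line does not change the degree `k ≥ 2` of `q`.
-/

open Polynomial Finset

section CommRing

variable {R : Type*} [CommRing R]

/-- The tangent line of the polynomial `q` at `a`, as a polynomial of degree at most one. It is what
is subtracted from `q` to obtain a nonnegative polynomial when the graph of `q` lies above it. -/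
noncomputable def tangentLine (q : R[X]) (a : R) : R[X] :=
  C (q.derivative.eval a) * (X - C a) + C (q.eval a)

lemma eval_tangentLine (q : R[X]) (a x : R) :
    (tangentLine q a).eval x = q.derivative.eval a * (x - a) + q.eval a := by
  simp [tangentLine]

lemma natDegree_tangentLine_le (q : R[X]) (a : R) : (tangentLine q a).natDegree ≤ 1 := by
  unfold tangentLine
  compute_degree

lemma natDegree_sub_tangentLine {q : R[X]} (hq : 1 < q.natDegree) (a : R) :
    (q - tangentLine q a).natDegree = q.natDegree :=
  natDegree_sub_eq_left_of_natDegree_lt ((natDegree_tangentLine_le q a).trans_lt hq)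

lemma eval_sub_tangentLine_of_isRoot {q : R[X]} {a x : R} (ha : q.IsRoot a) (hx : q.IsRoot x) :
    (q - tangentLine q a).eval x = q.derivative.eval a * (a - x) := by
  rw [eval_sub, eval_tangentLine, hx.eq_zero, ha.eq_zero]
  ring

lemma eval_derivative_nodal_pos [PartialOrder R] [IsStrictOrderedRing R] {ι : Type*} {s : Finset ι}
    {a : ι → R} {i₀ : ι} (hi₀ : i₀ ∈ s) (hmax : ∀ i ∈ s, i ≠ i₀ → a i < a i₀) :
    0 < (Lagrange.nodal s a).derivative.eval (a i₀) := by
  classical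
  rw [Lagrange.eval_nodal_derivative_eval_node_eq hi₀, Lagrange.eval_nodal]
  refine prod_pos fun i hi => sub_pos.mpr ?_
  exact hmax i (mem_of_mem_erase hi) (ne_of_mem_erase hi)

end CommRing

section LinearOrderedField

variable {K : Type*} [Field K] [LinearOrder K] [IsStrictOrderedRing K]

lemma exists_nonneg_interp_of_tangentLine_le {q : K[X]} {a m : K} (hdeg : 1 < q.natDegree)
    (ha : q.IsRoot a) (hd : 0 < q.derivative.eval a) (hm : 0 < m)
    (htangent : ∀ x, (tangentLine q a).eval x ≤ q.eval x) :
    ∃ p : K[X], p.natDegree = q.natDegree ∧ (∀ x, 0 ≤ p.eval x) ∧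
      ∀ x, q.IsRoot x → p.eval x = m * (a - x) := by
  have hscale : 0 < m / q.derivative.eval a := div_pos hm hd
  refine ⟨C (m / q.derivative.eval a) * (q - tangentLine q a), ?_, fun x => ?_, fun x hx => ?_⟩
  · rw [natDegree_C_mul hscale.ne', natDegree_sub_tangentLine hdeg]
  · rw [eval_C_mul, eval_sub]
    exact mul_nonneg hscale.le (sub_nonneg.mpr (htangent x))
  · rw [eval_C_mul, eval_sub_tangentLine_of_isRoot ha hx, ← mul_assoc, div_mul_cancel₀ m hd.ne']

theorem nonneg_interp_shifted_general {ι : Type*} {s : Finset ι} (hs : 1 < #s) {a : ι → K}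
    {i₀ : ι} (hi₀ : i₀ ∈ s) (hmax : ∀ i ∈ s, i ≠ i₀ → a i < a i₀) {c m : K} (hm : 0 < m)
    (hl0 : c - m * a i₀ = 0)
    (htangent : ∀ x, (Lagrange.nodal s a).derivative.eval (a i₀) * (x - a i₀) ≤
      (Lagrange.nodal s a).eval x) :
    ∃ p : K[X], p.natDegree = #s ∧ (∀ x, 0 ≤ p.eval x) ∧
      ∀ i ∈ s, p.eval (a i) = c - m * a i := by
  have hroot : ∀ i ∈ s, (Lagrange.nodal s a).IsRoot (a i) :=
    fun i hi => Lagrange.eval_nodal_at_node hi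
  have habove : ∀ x, (tangentLine (Lagrange.nodal s a) (a i₀)).eval x ≤
      (Lagrange.nodal s a).eval x := fun x => by
    rw [eval_tangentLine, (hroot i₀ hi₀).eq_zero, add_zero]
    exact htangent x
  obtain ⟨p, hdeg, hnonneg, hinterp⟩ := exists_nonneg_interp_of_tangentLine_le
    (by rwa [Lagrange.natDegree_nodal]) (hroot i₀ hi₀) (eval_derivative_nodal_pos hi₀ hmax)
    hm habove
  refine ⟨p, hdeg.trans Lagrange.natDegree_nodal, hnonneg, fun i hi => ?_⟩
  rw [hinterp (a i) (hroot i hi)]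
  linear_combination -hl0

end LinearOrderedField

/-- Shifted version of the nonnegative interpolation criterion: if `q(x) = ∏ (x − aᵢ)`
(`a₀ > a₁ > … > a_{k−1}`, `k` even) lies above its tangent line at `x = a₀`, then
any decreasing linear function `l` vanishing at `a₀` admits a globally nonnegative
interpolant of degree `k` through the points `(aᵢ, l(aᵢ))`. -/
theorem nonneg_interp_shifted (k : ℕ) (hk : 0 < k) (hke : Even k)
    (a : ℕ → ℝ) (hmono : ∀ i j, i < j → j < k → a j < a i)
    (c m : ℝ) (hm : 0 < m) (hl0 : c - m * a 0 = 0)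
    (q : Polynomial ℝ) (hq : q = ∏ i ∈ Finset.range k, (X - C (a i)))
    (htangent : ∀ x : ℝ, q.derivative.eval (a 0) * (x - a 0) ≤ q.eval x) :
    ∃ p : Polynomial ℝ, p.natDegree = k ∧ (∀ x : ℝ, 0 ≤ p.eval x) ∧
      ∀ i < k, p.eval (a i) = c - m * a i := by
  have hcard : 1 < #(range k) := (Nat.le_of_dvd hk hke.two_dvd).trans_eq (card_range k).symm
  subst hq
  simpa only [card_range, mem_range] using
    nonneg_interp_shifted_general hcard (mem_range.mpr hk)
      (fun i hi hne => hmono 0 i (Nat.pos_of_ne_zero hne) (mem_range.mp hi)) hm hl0 htangent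
end

section
/- Let N be a positive integer and let T_N denote the Chebyshev polynomial of the first kind of degree N. Then for every real u ≥ cos(π/N) and every x ≥ −1, T_N(x) ≥ T_N(u) + T_N'(u)·(x − u), where T_N' is the derivative of T_N. Moreover, if N is even, this inequality holds for all x ∈ ℝ. -/
/-!
Write `c = cos (π / N)`. The derivative `T_N' = N * U_{N-1}` has positive leading coefficient, and
its roots are all real and at most `c`; hence it is nonnegative and nondecreasing on `[c, ∞)`. So
`T_N` is convex there and lies above its tangent at `u ≥ c`. This tangent has nonnegative slope, so
the bound passes from a point `y` to any `x ≤ y` with `T_N y ≤ T_N x`: on `[-1, c]` take `y = c`,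
a minimum of `T_N` on `[-1, 1]`; for even `N` and arbitrary `x` take `y = |x|`.
-/

open Real Polynomial Polynomial.Chebyshev

section SplitPolynomial

variable {R : Type*} [CommRing R] [LinearOrder R] [IsStrictOrderedRing R] {p : R[X]} {c : R}

lemma eval_nonneg_of_splits_of_roots_le (hp : p.Splits) (hlead : 0 ≤ p.leadingCoeff)
    (hroots : ∀ a ∈ p.roots, a ≤ c) {x : R} (hx : c ≤ x) : 0 ≤ p.eval x := by
  rw [hp.eval_eq_prod_roots]
  refine mul_nonneg hlead (Multiset.prod_nonneg fun b hb => ?_)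
  obtain ⟨a, ha, rfl⟩ := Multiset.mem_map.mp hb
  exact sub_nonneg.mpr ((hroots a ha).trans hx)

lemma monotoneOn_eval_Ici_of_splits_of_roots_le (hp : p.Splits) (hlead : 0 ≤ p.leadingCoeff)
    (hroots : ∀ a ∈ p.roots, a ≤ c) : MonotoneOn p.eval (Set.Ici c) := by
  intro x hx y _ hxy
  simp only [hp.eval_eq_prod_roots]
  refine mul_le_mul_of_nonneg_left (Multiset.prod_map_le_prod_map₀ _ _ ?_ ?_) hlead
  · exact fun a ha => sub_nonneg.mpr ((hroots a ha).trans hx)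
  · exact fun a _ => sub_le_sub_right hxy a

end SplitPolynomial

lemma convexOn_eval_of_monotoneOn_derivative {p : ℝ[X]} {s : Set ℝ} (hs : Convex ℝ s)
    (hp : MonotoneOn p.derivative.eval s) : ConvexOn ℝ s p.eval := by
  refine MonotoneOn.convexOn_of_deriv hs p.continuousOn p.differentiableOn ?_
  have hderiv : deriv p.eval = p.derivative.eval := funext fun _ => p.deriv
  exact hderiv ▸ hp.mono interior_subset

lemma tangent_le_of_convexOn {f : ℝ → ℝ} {f' u x : ℝ} {s : Set ℝ} (hf : ConvexOn ℝ s f)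
    (hu : u ∈ s) (hx : x ∈ s) (hderiv : HasDerivWithinAt f f' s u) :
    f u + f' * (x - u) ≤ f x := by
  rcases lt_trichotomy u x with hux | rfl | hxu
  · have hslope := hf.le_slope_of_hasDerivWithinAt hu hx hux hderiv
    rw [slope_def_field, le_div_iff₀ (sub_pos.mpr hux)] at hslope
    linarith
  · simp
  · have hslope := hf.slope_le_of_hasDerivWithinAt hx hu hxu hderiv
    rw [slope_def_field, div_le_iff₀ (sub_pos.mpr hxu)] at hslope
    linarith

lemma add_mul_sub_le_of_nonneg_of_le {R : Type*} [Ring R] [PartialOrder R] [IsOrderedRing R]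
    {a m u x y fx fy : R} (hm : 0 ≤ m) (hline : a + m * (y - u) ≤ fy) (hxy : x ≤ y)
    (hfyx : fy ≤ fx) : a + m * (x - u) ≤ fx :=
  calc a + m * (x - u) ≤ a + m * (y - u) := by gcongr
    _ ≤ fy := hline
    _ ≤ fx := hfyx

section ChebyshevU

variable (n : ℕ)

lemma splits_U_real : (U ℝ n).Splits := by
  rw [splits_iff_card_roots, roots_U_real, natDegree_U_natCast, Finset.card_val,
    Finset.card_image_of_injOn ((Finset.range n).nodup_map_iff_injOn.mp (roots_U_real_nodup n)),
    Finset.card_range]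

lemma le_cos_pi_div_of_mem_roots_U_real {a : ℝ} (ha : a ∈ (U ℝ n).roots) :
    a ≤ cos (π / (n + 1)) := by
  rw [roots_U_real, Finset.mem_val] at ha
  obtain ⟨k, hk, rfl⟩ := Finset.mem_image.mp ha
  have hkn : (k : ℝ) ≤ n := by exact_mod_cast (Finset.mem_range.mp hk).le
  apply cos_le_cos_of_nonneg_of_le_pi (by positivity)
  · rw [div_le_iff₀ (by positivity), mul_comm]
    gcongr
  · gcongr
    exact le_mul_of_one_le_left pi_pos.le (by simp)

lemma leadingCoeff_U_real_nonneg : 0 ≤ (U ℝ n).leadingCoeff := by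
  rw [leadingCoeff_U_natCast]
  positivity

lemma eval_U_real_nonneg_of_cos_le {x : ℝ} (hx : cos (π / (n + 1)) ≤ x) : 0 ≤ (U ℝ n).eval x :=
  eval_nonneg_of_splits_of_roots_le (splits_U_real n) (leadingCoeff_U_real_nonneg n)
    (fun _ => le_cos_pi_div_of_mem_roots_U_real n) hx

lemma monotoneOn_eval_U_real_Ici_cos : MonotoneOn (U ℝ n).eval (Set.Ici (cos (π / (n + 1)))) :=
  monotoneOn_eval_Ici_of_splits_of_roots_le (splits_U_real n) (leadingCoeff_U_real_nonneg n)
    fun _ => le_cos_pi_div_of_mem_roots_U_real n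

end ChebyshevU

section ChebyshevT

lemma eval_derivative_T_succ {R : Type*} [CommRing R] (n : ℕ) (x : R) :
    (T R (n + 1 : ℕ)).derivative.eval x = (n + 1) * (U R n).eval x := by
  simp [T_derivative_eq_U]

variable (N : ℕ)

lemma eval_derivative_T_real_nonneg_of_cos_le {x : ℝ} (hx : cos (π / N) ≤ x) :
    0 ≤ (T ℝ N).derivative.eval x := by
  rcases N with _ | n
  · simp
  · rw [eval_derivative_T_succ]
    exact mul_nonneg (by positivity) (eval_U_real_nonneg_of_cos_le n (by exact_mod_cast hx))

lemma monotoneOn_eval_derivative_T_real_Ici_cos :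
    MonotoneOn (T ℝ N).derivative.eval (Set.Ici (cos (π / N))) := by
  rcases N with _ | n
  · simp [monotoneOn_const]
  · intro x hx y hy hxy
    simp only [eval_derivative_T_succ]
    push_cast at hx hy
    exact mul_le_mul_of_nonneg_left (monotoneOn_eval_U_real_Ici_cos n hx hy hxy) (by positivity)

lemma convexOn_eval_T_real_Ici_cos : ConvexOn ℝ (Set.Ici (cos (π / N))) (T ℝ N).eval :=
  convexOn_eval_of_monotoneOn_derivative (convex_Ici _)
    (monotoneOn_eval_derivative_T_real_Ici_cos N)

lemma tangent_T_real_le_of_cos_le {u x : ℝ} (hu : cos (π / N) ≤ u) (hx : cos (π / N) ≤ x) :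
    (T ℝ N).eval u + (T ℝ N).derivative.eval u * (x - u) ≤ (T ℝ N).eval x :=
  tangent_le_of_convexOn (convexOn_eval_T_real_Ici_cos N) hu hx
    ((T ℝ N).hasDerivAt u).hasDerivWithinAt

variable {N}

lemma eval_T_real_cos_pi_div_le (hN : N ≠ 0) {x : ℝ} (hx : x ∈ Set.Icc (-1) 1) :
    (T ℝ N).eval (cos (π / N)) ≤ (T ℝ N).eval x := by
  simpa using isMinOn_T_real hN (Nat.one_le_iff_ne_zero.mpr hN) odd_one hx

lemma eval_T_abs_of_even {R : Type*} [CommRing R] [LinearOrder R] (hN : Even N) (x : R) :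
    (T R N).eval |x| = (T R N).eval x := by
  rcases abs_choice x with hx | hx
  · rw [hx]
  · rw [hx, T_eval_neg, Int.negOnePow_even _ (by exact_mod_cast hN)]
    simp

end ChebyshevT

/-- The Chebyshev polynomial `T_N` lies above its tangent line at any point
`u ≥ cos(π/N)`, on the interval `[−1, ∞)`; when `N` is even, on all of `ℝ`. -/
theorem chebyshev_above_tangent (N : ℕ) (hN : 0 < N) :
    (∀ u x : ℝ, Real.cos (π / N) ≤ u → -1 ≤ x →
      (Polynomial.Chebyshev.T ℝ N).eval u +
          (Polynomial.Chebyshev.T ℝ N).derivative.eval u * (x - u) ≤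
        (Polynomial.Chebyshev.T ℝ N).eval x) ∧
    (Even N → ∀ u x : ℝ, Real.cos (π / N) ≤ u →
      (Polynomial.Chebyshev.T ℝ N).eval u +
          (Polynomial.Chebyshev.T ℝ N).derivative.eval u * (x - u) ≤
        (Polynomial.Chebyshev.T ℝ N).eval x) := by
  have tangent_le (u x : ℝ) (hu : Real.cos (π / N) ≤ u) (hx : -1 ≤ x) :
      (T ℝ N).eval u + (T ℝ N).derivative.eval u * (x - u) ≤ (T ℝ N).eval x := by
    rcases le_total (Real.cos (π / N)) x with hcx | hxc
    · exact tangent_T_real_le_of_cos_le N hu hcx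
    · exact add_mul_sub_le_of_nonneg_of_le (eval_derivative_T_real_nonneg_of_cos_le N hu)
        (tangent_T_real_le_of_cos_le N hu le_rfl) hxc
        (eval_T_real_cos_pi_div_le hN.ne' ⟨hx, hxc.trans (cos_le_one _)⟩)
  refine ⟨tangent_le, fun hEven u x hu => ?_⟩
  exact add_mul_sub_le_of_nonneg_of_le (eval_derivative_T_real_nonneg_of_cos_le N hu)
    (tangent_le u |x| hu (neg_one_lt_zero.le.trans (abs_nonneg x))) (le_abs_self x)
    (eval_T_abs_of_even hEven x).le
end

section
/- For an integer N ≥ 1, let q_N(X) = Π_{i=0}^{⌈N/2⌉−1} (X − cos((2i+1)π/N)). Then: if N is even, there exists a nonzero real constant c with q_N = c·T_{N/2}; and if N is odd, there exists a nonzero real constant c with q_N = c·(T_{(N−1)/2} + T_{(N+1)/2}). -/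
open Real Polynomial Polynomial.Chebyshev Finset

/-!
Both parities are instances of one fact: `q_N` is proportional to `T_m + T_n` with `m = ⌊N/2⌋` and
`n = ⌈N/2⌉`, whose two summands coincide when `N` is even. Indeed
`cos (mθ) + cos (nθ) = 2 cos ((m + n)θ/2) cos ((m - n)θ/2)` vanishes whenever `(m + n)θ` is an odd
multiple of `π`, so `T_m + T_n` vanishes at the roots of `q_N`. These are `n` distinct numbers, and
`T_m + T_n` has degree `n`.
-/

lemma C_leadingCoeff_mul_nodal {R ι : Type*} [CommRing R] [IsDomain R] {s : Finset ι} {v : ι → R}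
    {p : R[X]} (hv : Set.InjOn v s) (hdeg : p.degree = #s) (hroot : ∀ i ∈ s, p.IsRoot (v i)) :
    C p.leadingCoeff * Lagrange.nodal s v = p := by
  have hlc : p.leadingCoeff ≠ 0 :=
    leadingCoeff_ne_zero.2 fun hp => by simp [hp] at hdeg
  have hdeg' : (C p.leadingCoeff * Lagrange.nodal s v).degree = #s := by
    rw [degree_C_mul hlc, Lagrange.degree_nodal]
  refine eq_of_degree_le_of_eval_index_eq s hv hdeg'.le (hdeg'.trans hdeg.symm) ?_ fun i hi => ?_
  · rw [leadingCoeff_mul, leadingCoeff_C, Lagrange.nodal_monic.leadingCoeff, mul_one]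
  · rw [eval_mul, Lagrange.eval_nodal_at_node hi, mul_zero, (hroot i hi).eq_zero]

lemma degree_T_add_T (R : Type*) [CommRing R] [IsDomain R] [NeZero (2 : R)] (m n : ℤ) :
    (T R m + T R n).degree = (max m.natAbs n.natAbs : ℕ) := by
  rcases lt_trichotomy m.natAbs n.natAbs with hlt | heq | hgt
  · rw [degree_add_eq_right_of_degree_lt (by simpa using hlt), degree_T, max_eq_right hlt.le]
  · have hT : T R m = T R n := by rw [← T_natAbs, heq, T_natAbs]
    rw [hT, ← two_mul, ← C_ofNat, degree_C_mul two_ne_zero, degree_T, heq, max_self]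
  · rw [degree_add_eq_left_of_degree_lt (by simpa using hgt), degree_T, max_eq_left hgt.le]

lemma isRoot_T_add_T_cos {m n k : ℤ} {θ : ℝ} (hθ : (m + n) * θ = (2 * k + 1) * π) :
    (T ℝ m + T ℝ n).IsRoot (cos θ) := by
  have hcos : cos ((m * θ + n * θ) / 2) = 0 :=
    cos_eq_zero_iff.2 ⟨k, by rw [← add_mul, hθ]⟩
  rw [IsRoot.def, eval_add, T_real_cos, T_real_cos, cos_add_cos, hcos, mul_zero, zero_mul]

lemma injOn_node_two_mul_add_one (N : ℕ) :
    Set.InjOn (fun i => node N (2 * i + 1)) (range ((N + 1) / 2)) := by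
  refine (strictAntiOn_node N).injOn.comp (f := fun i => 2 * i + 1) (fun i _ j _ h => ?_)
    fun i hi => ?_
  · simpa using h
  · simp only [coe_range, Set.mem_Iio] at hi ⊢
    omega

lemma isRoot_T_add_T_node {N m n : ℕ} (hN : N ≠ 0) (hmn : m + n = N) (i : ℕ) :
    (T ℝ m + T ℝ n).IsRoot (node N (2 * i + 1)) := by
  refine isRoot_T_add_T_cos (k := i) ?_
  have hN' : (N : ℝ) ≠ 0 := Nat.cast_ne_zero.2 hN
  have hsum : (m + n : ℝ) = N := mod_cast hmn
  push_cast
  rw [hsum, mul_div_cancel₀ _ hN']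

lemma exists_nodal_node_eq_C_mul_T_add_T (N : ℕ) :
    ∃ c : ℝ, c ≠ 0 ∧ Lagrange.nodal (range ((N + 1) / 2)) (fun i => node N (2 * i + 1)) =
      C c * (T ℝ (N / 2 : ℕ) + T ℝ ((N + 1) / 2 : ℕ)) := by
  set p := T ℝ (N / 2 : ℕ) + T ℝ ((N + 1) / 2 : ℕ)
  have hdeg : p.degree = #(range ((N + 1) / 2)) := by
    rw [degree_T_add_T, card_range, Int.natAbs_natCast, Int.natAbs_natCast,
      max_eq_right (by omega)]
  have hroot : ∀ i ∈ range ((N + 1) / 2), p.IsRoot (node N (2 * i + 1)) := fun i hi =>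
    isRoot_T_add_T_node (by rintro rfl; simp at hi) (by omega) i
  have hlc : p.leadingCoeff ≠ 0 :=
    leadingCoeff_ne_zero.2 fun hp => by simp [hp] at hdeg
  have hp := C_leadingCoeff_mul_nodal (injOn_node_two_mul_add_one N) hdeg hroot
  refine ⟨p.leadingCoeff⁻¹, inv_ne_zero hlc, ?_⟩
  calc Lagrange.nodal (range ((N + 1) / 2)) (fun i => node N (2 * i + 1))
    _ = C p.leadingCoeff⁻¹ * (C p.leadingCoeff * Lagrange.nodal _ _) := by
      rw [← mul_assoc, ← Polynomial.C_mul, inv_mul_cancel₀ hlc, C_1, one_mul]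
    _ = C p.leadingCoeff⁻¹ * p := by rw [hp]

/-- The monic polynomial with roots `cos((2i+1)π/N)`, `i = 0, …, ⌈N/2⌉−1`, is a nonzero
scalar multiple of `T_{N/2}` when `N` is even, and of `(T_{(N−1)/2} + T_{(N+1)/2})`
when `N` is odd. -/
theorem qN_eq_chebyshev (N : ℕ) (hN : 1 ≤ N)
    (q : Polynomial ℝ)
    (hq : q = ∏ i ∈ Finset.range ((N + 1) / 2),
        (X - C (Real.cos ((2 * (i : ℝ) + 1) * π / N)))) :
    (Even N → ∃ c : ℝ, c ≠ 0 ∧ q = C c * Polynomial.Chebyshev.T ℝ (N / 2)) ∧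
    (Odd N → ∃ c : ℝ, c ≠ 0 ∧
      q = C c * (Polynomial.Chebyshev.T ℝ ((N - 1) / 2) +
                 Polynomial.Chebyshev.T ℝ ((N + 1) / 2))) := by
  obtain ⟨c, hc, hnodal⟩ := exists_nodal_node_eq_C_mul_T_add_T N
  have hqT : q = C c * (T ℝ (N / 2) + T ℝ ((N + 1) / 2)) := by
    simpa [hq, Lagrange.nodal, node] using hnodal
  refine ⟨fun hEven => ⟨c * 2, mul_ne_zero hc two_ne_zero, ?_⟩, fun hOdd => ⟨c, hc, ?_⟩⟩
  · have hindex : ((N : ℤ) + 1) / 2 = N / 2 := by grind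
    rw [hqT, hindex, ← two_mul, Polynomial.C_mul, C_ofNat, mul_assoc]
  · have hindex : ((N : ℤ) - 1) / 2 = N / 2 := by grind
    rw [hqT, hindex]
end

section
/- Let N ≥ 3 be an integer and let K ⊆ ℤ/Nℤ be a set with |K| < ln(N/2). Then K admits a valid clustering: there exist an integer γ with 1 ≤ γ < N/2 and a partition of K into disjoint clusters K = ⋃_{α∈A} C_α such that every cluster C_α has in-diameter at most γ, and for all α ≠ α' the cyclic distance d(C_α, C_{α'}) is strictly greater than γ. -/
open Real Finset

/-- The cyclic distance on `ℤ/Nℤ`: `d(a,b) = min{|m| : m ∈ ℤ, m ≡ a − b (mod N)}`. -/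
def cycDist (N : ℕ) (a b : ZMod N) : ℕ := min (a - b).val (b - a).val

/-- `C ⊆ ℤ/Nℤ` has in-diameter at most `γ` if it is contained in an interval
`{x, x+1, …, x+γ}`. -/
def HasInDiamLE (N γ : ℕ) (C : Finset (ZMod N)) : Prop :=
  ∃ x : ZMod N, ∀ c ∈ C, ∃ t : ℕ, t ≤ γ ∧ c = x + (t : ZMod N)

/-!
Start with the partition of `K` into singletons and `γ = 1`. As long as two clusters contain points
at distance at most `γ`, merge them and double `γ`. The invariant is that the in-diameters of the
clusters *sum* to at most `γ`: a merge through two points at distance at most `γ` increases the sum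
by at most `γ`. Each merge removes a cluster, so fewer than `|K|` merges occur when `K ≠ ∅`, and the
process stops with `2γ ≤ 2 ^ |K|`, while `2 ^ |K| ≤ e ^ |K| < N / 2`.
-/

section MergeParts

variable {α : Type*} [Lattice α] [OrderBot α] [DecidableEq α] {a b c : α}

theorem sup_notMem_parts_sdiff_pair (P : Finpartition a) (hb : b ∈ P.parts) (c : α) :
    b ⊔ c ∉ P.parts \ {b, c} := by
  intro h
  simp only [mem_sdiff, mem_insert, not_or] at h
  have hdisj : Disjoint b (b ⊔ c) := P.disjoint hb h.1 (Ne.symm h.2.1)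
  exact P.ne_bot hb (hdisj.eq_bot_of_le le_sup_left)

variable [IsModularLattice α]

/-- The partition obtained from `P` by replacing its parts `b` and `c` with their join `b ⊔ c`;
it is `P` itself if `b = c`. -/
def mergeParts (P : Finpartition a) (hb : b ∈ P.parts) (hc : c ∈ P.parts) : Finpartition a :=
  have hbc : {b, c} ⊆ P.parts := insert_subset hb (singleton_subset_iff.2 hc)
  (P.ofSubset (sdiff_subset (t := {b, c})) rfl).extend (b := b ⊔ c)
    (fun h => P.ne_bot hb (sup_eq_bot_iff.1 h).1)
    (by simpa using P.supIndep.disjoint_sup_sup sdiff_subset hbc sdiff_disjoint)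
    (calc (P.parts \ {b, c}).sup id ⊔ (b ⊔ c)
      _ = (P.parts \ {b, c} ∪ {b, c}).sup id := by
          simp only [sup_union, sup_insert, sup_singleton, id]
      _ = a := by rw [sdiff_union_of_subset hbc, P.sup_parts])

theorem parts_mergeParts (P : Finpartition a) (hb : b ∈ P.parts) (hc : c ∈ P.parts) :
    (mergeParts P hb hc).parts = insert (b ⊔ c) (P.parts \ {b, c}) :=
  rfl

theorem sum_mergeParts {M : Type*} [AddCommMonoid M] (P : Finpartition a)
    (hb : b ∈ P.parts) (hc : c ∈ P.parts) (f : α → M) :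
    ∑ p ∈ (mergeParts P hb hc).parts, f p = f (b ⊔ c) + ∑ p ∈ P.parts \ {b, c}, f p := by
  rw [parts_mergeParts, sum_insert (sup_notMem_parts_sdiff_pair P hb c)]

theorem card_mergeParts_add_one (P : Finpartition a) (hb : b ∈ P.parts) (hc : c ∈ P.parts)
    (hbc : b ≠ c) : #(mergeParts P hb hc).parts + 1 = #P.parts := by
  rw [parts_mergeParts, card_insert_of_notMem (sup_notMem_parts_sdiff_pair P hb c), add_assoc,
    one_add_one_eq_two, ← card_pair hbc,
    card_sdiff_add_card_eq_card (insert_subset hb (singleton_subset_iff.2 hc))]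

end MergeParts

section Clustering

variable {α M : Type*} [DecidableEq α]

/-- A valid clustering at scale `γ`: every cluster has diameter at most `γ`, and points of distinct
clusters are at distance greater than `γ`. The distance and the diameter are arbitrary functions, so
that the in-diameter in `ℤ/Nℤ`, which is not the diameter of a metric, is covered. -/
structure IsValidClustering [Preorder M] {K : Finset α} (dist : α → α → M) (diam : Finset α → M)
    (γ : M) (P : Finpartition K) : Prop where
  diam_le : ∀ C ∈ P.parts, diam C ≤ γ
  lt_dist : ∀ C ∈ P.parts, ∀ C' ∈ P.parts, C ≠ C' → ∀ k ∈ C, ∀ k' ∈ C', γ < dist k k'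

variable [AddCommMonoid M] [LinearOrder M] [IsOrderedAddMonoid M]
  {dist : α → α → M} {diam : Finset α → M} {K : Finset α} {γ : M}

theorem sum_diam_mergeParts_le {P : Finpartition K} (hsum : ∑ C ∈ P.parts, diam C ≤ γ)
    {C C' : Finset α} (hC : C ∈ P.parts) (hC' : C' ∈ P.parts) (hne : C ≠ C')
    (hunion : diam (C ∪ C') ≤ diam C + diam C' + γ) :
    ∑ D ∈ (mergeParts P hC hC').parts, diam D ≤ 2 • γ := by
  have hpair : {C, C'} ⊆ P.parts := insert_subset hC (singleton_subset_iff.2 hC')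
  calc ∑ D ∈ (mergeParts P hC hC').parts, diam D
      = diam (C ∪ C') + ∑ D ∈ P.parts \ {C, C'}, diam D := sum_mergeParts P hC hC' diam
    _ ≤ diam C + diam C' + γ + ∑ D ∈ P.parts \ {C, C'}, diam D := by gcongr
    _ = ∑ D ∈ P.parts, diam D + γ := by
        rw [← sum_sdiff hpair, sum_pair hne]
        abel
    _ ≤ γ + γ := by gcongr
    _ = 2 • γ := (two_nsmul γ).symm

theorem exists_isValidClustering_of_sum_diam_le (diam_nonneg : ∀ C, 0 ≤ diam C)
    (diam_union_le : ∀ C C', ∀ k ∈ C, ∀ k' ∈ C', diam (C ∪ C') ≤ diam C + diam C' + dist k k')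
    (P : Finpartition K) (hsum : ∑ C ∈ P.parts, diam C ≤ γ) :
    ∃ (i : ℕ) (Q : Finpartition K), i + #Q.parts = #P.parts ∧
      IsValidClustering dist diam (2 ^ i • γ) Q := by
  induction hn : #P.parts using Nat.strong_induction_on generalizing P γ with
  | h n ih =>
    by_cases hsep : ∀ C ∈ P.parts, ∀ C' ∈ P.parts, C ≠ C' → ∀ k ∈ C, ∀ k' ∈ C', γ < dist k k'
    · refine ⟨0, P, by omega, fun C hC => ?_, by simpa using hsep⟩
      simpa using (single_le_sum (fun D _ => diam_nonneg D) hC).trans hsum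
    · push Not at hsep
      obtain ⟨C, hC, C', hC', hne, k, hk, k', hk', hdist⟩ := hsep
      have hunion : diam (C ∪ C') ≤ diam C + diam C' + γ :=
        (diam_union_le C C' k hk k' hk').trans (by gcongr)
      have hcard : #(mergeParts P hC hC').parts + 1 = #P.parts :=
        card_mergeParts_add_one P hC hC' hne
      obtain ⟨i, Q, hi, hQ⟩ := ih _ (by omega) (mergeParts P hC hC')
        (sum_diam_mergeParts_le hsum hC hC' hne hunion) rfl
      exact ⟨i + 1, Q, by omega, by rwa [pow_succ, mul_smul]⟩

theorem exists_isValidClustering (diam_nonneg : ∀ C, 0 ≤ diam C)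
    (diam_singleton : ∀ k, diam {k} = 0)
    (diam_union_le : ∀ C C', ∀ k ∈ C, ∀ k' ∈ C', diam (C ∪ C') ≤ diam C + diam C' + dist k k')
    (K : Finset α) (hγ : 0 ≤ γ) :
    ∃ (i : ℕ) (P : Finpartition K), i + #P.parts = #K ∧
      IsValidClustering dist diam (2 ^ i • γ) P := by
  rw [← Finpartition.card_bot K]
  refine exists_isValidClustering_of_sum_diam_le diam_nonneg diam_union_le ⊥ ?_
  simpa [diam_singleton] using hγ

end Clustering

section InDiam

variable {N : ℕ}

/-- The arc `{x, x + 1, …, x + γ}` of `ℤ/Nℤ`; for `γ ≥ N > 0` it is the whole of `ℤ/Nℤ`. -/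
def arc (N : ℕ) (x : ZMod N) (γ : ℕ) : Set (ZMod N) := {c | ∃ t : ℕ, t ≤ γ ∧ c = x + t}

theorem arc_subset_arc_right (x : ZMod N) {γ δ : ℕ} (h : γ ≤ δ) : arc N x γ ⊆ arc N x δ :=
  fun _ ⟨t, ht, hc⟩ => ⟨t, ht.trans h, hc⟩

theorem arc_add_natCast_subset (x : ZMod N) (s γ : ℕ) : arc N (x + s) γ ⊆ arc N x (s + γ) := by
  rintro _ ⟨t, ht, rfl⟩
  exact ⟨s + t, by omega, by push_cast; ring⟩

theorem exists_arc_union_arc_subset {x x' k : ZMod N} {l l' t : ℕ} (hk : k ∈ arc N x l)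
    (hk' : k + t ∈ arc N x' l') : ∃ z, arc N x l ∪ arc N x' l' ⊆ arc N z (l + l' + t) := by
  obtain ⟨a, ha, rfl⟩ := hk
  obtain ⟨b, hb, hab⟩ := hk'
  -- The enclosing arc starts at whichever of `x` and `x' = x + (a + t - b)` comes first.
  rcases le_total b (a + t) with h | h
  · obtain ⟨s, hs⟩ := Nat.exists_eq_add_of_le h
    have hs' : (a : ZMod N) + t = b + s := by exact_mod_cast congrArg (Nat.cast (R := ZMod N)) hs
    obtain rfl : x' = x + s := by linear_combination hs' - hab
    exact ⟨x, Set.union_subset (arc_subset_arc_right x (by omega))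
      ((arc_add_natCast_subset x s l').trans (arc_subset_arc_right x (by omega)))⟩
  · obtain ⟨s, hs⟩ := Nat.exists_eq_add_of_le h
    have hs' : (b : ZMod N) = a + t + s := by exact_mod_cast congrArg (Nat.cast (R := ZMod N)) hs
    obtain rfl : x = x' + s := by linear_combination hab + hs'
    exact ⟨x', Set.union_subset
      ((arc_add_natCast_subset x' s l).trans (arc_subset_arc_right x' (by omega)))
      (arc_subset_arc_right x' (by omega))⟩

theorem hasInDiamLE_iff_exists_subset_arc {γ : ℕ} {C : Finset (ZMod N)} :
    HasInDiamLE N γ C ↔ ∃ x, (C : Set (ZMod N)) ⊆ arc N x γ :=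
  Iff.rfl

theorem HasInDiamLE.mono {γ δ : ℕ} {C : Finset (ZMod N)} (h : HasInDiamLE N γ C) (hle : γ ≤ δ) :
    HasInDiamLE N δ C := by
  obtain ⟨x, hx⟩ := hasInDiamLE_iff_exists_subset_arc.1 h
  exact ⟨x, hx.trans (arc_subset_arc_right x hle)⟩

theorem HasInDiamLE.union {l l' t : ℕ} {C C' : Finset (ZMod N)} (h : HasInDiamLE N l C)
    (h' : HasInDiamLE N l' C') {k : ZMod N} (hk : k ∈ C) (hk' : k + t ∈ C') :
    HasInDiamLE N (l + l' + t) (C ∪ C') := by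
  obtain ⟨x, hx⟩ := hasInDiamLE_iff_exists_subset_arc.1 h
  obtain ⟨x', hx'⟩ := hasInDiamLE_iff_exists_subset_arc.1 h'
  obtain ⟨z, hz⟩ := exists_arc_union_arc_subset (hx hk) (hx' hk')
  refine hasInDiamLE_iff_exists_subset_arc.2 ⟨z, ?_⟩
  rw [coe_union]
  exact (Set.union_subset_union hx hx').trans hz

/-- The in-diameter of `C ⊆ ℤ/Nℤ`: the least `γ` such that `C` lies in an arc
`{x, x + 1, …, x + γ}`. -/
noncomputable def inDiam (N : ℕ) (C : Finset (ZMod N)) : ℕ := sInf {γ | HasInDiamLE N γ C}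

theorem inDiam_singleton (k : ZMod N) : inDiam N {k} = 0 :=
  Nat.sInf_eq_zero.2 (Or.inl ⟨k, fun c hc => ⟨0, le_rfl, by simpa using hc⟩⟩)

variable [NeZero N]

theorem hasInDiamLE_inDiam (C : Finset (ZMod N)) : HasInDiamLE N (inDiam N C) C :=
  Nat.sInf_mem (s := {γ | HasInDiamLE N γ C})
    ⟨N, 0, fun c _ => ⟨c.val, c.val_le, by simp⟩⟩

theorem eq_add_cycDist_or_eq_add_cycDist (a b : ZMod N) :
    b = a + cycDist N a b ∨ a = b + cycDist N a b := by
  rcases min_choice (a - b).val (b - a).val with h | h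
  · exact .inr (by simp [cycDist, h])
  · exact .inl (by simp [cycDist, h])

theorem inDiam_union_le {C C' : Finset (ZMod N)} {k k' : ZMod N} (hk : k ∈ C) (hk' : k' ∈ C') :
    inDiam N (C ∪ C') ≤ inDiam N C + inDiam N C' + cycDist N k k' := by
  have hC := hasInDiamLE_inDiam C
  have hC' := hasInDiamLE_inDiam C'
  rcases eq_add_cycDist_or_eq_add_cycDist k k' with h | h
  · exact Nat.sInf_le (hC.union hC' hk (h ▸ hk'))
  · rw [union_comm, add_comm (inDiam N C)]
    exact Nat.sInf_le (hC'.union hC hk' (h ▸ hk))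

end InDiam

theorem two_pow_lt_of_natCast_lt_log {n : ℕ} {x : ℝ} (hx : 0 < x) (h : (n : ℝ) < Real.log x) :
    (2 : ℝ) ^ n < x :=
  calc (2 : ℝ) ^ n ≤ Real.exp 1 ^ n := by
        gcongr
        linarith [Real.add_one_le_exp (1 : ℝ)]
    _ = Real.exp n := Real.exp_one_pow n
    _ < x := (Real.lt_log_iff_exp_lt hx).1 h

theorem small_set_has_valid_clustering_general (N : ℕ) (hN : 3 ≤ N) (K : Finset (ZMod N))
    (hK : 2 ^ #K < N) :
    ∃ γ : ℕ, 1 ≤ γ ∧ 2 * γ < N ∧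
      ∃ P : Finset (Finset (ZMod N)),
        K = P.biUnion id ∧
        (∀ C ∈ P, ∀ C' ∈ P, C ≠ C' → Disjoint C C') ∧
        (∀ C ∈ P, HasInDiamLE N γ C) ∧
        (∀ C ∈ P, ∀ C' ∈ P, C ≠ C' → ∀ k ∈ C, ∀ k' ∈ C', γ < cycDist N k k') := by
  have : NeZero N := ⟨by omega⟩
  obtain ⟨i, P, hi, hP⟩ := exists_isValidClustering (γ := 1) (fun C => Nat.zero_le (inDiam N C))
    inDiam_singleton (fun _ _ _ hk _ hk' => inDiam_union_le hk hk') K zero_le_one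
  rw [smul_eq_mul, mul_one] at hP
  have hscale : 2 * 2 ^ i < N := by
    rcases K.eq_empty_or_nonempty with rfl | hne
    · obtain rfl : i = 0 := by
        rw [card_empty] at hi
        omega
      omega
    · have hparts : 0 < #P.parts := card_pos.2 (P.parts_nonempty hne.ne_empty)
      calc 2 * 2 ^ i = 2 ^ (i + 1) := (pow_succ' 2 i).symm
        _ ≤ 2 ^ #K := Nat.pow_le_pow_right two_pos (by omega)
        _ < N := hK
  exact ⟨2 ^ i, Nat.one_le_two_pow, hscale, P.parts, P.biUnion_parts.symm, P.disjoint,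
    fun C hC => (hasInDiamLE_inDiam C).mono (hP.diam_le C hC), hP.lt_dist⟩

/-- Any `K ⊆ ℤ/Nℤ` with `|K| < ln(N/2)` admits a valid clustering: a partition into
clusters of in-diameter at most `γ` that are pairwise at cyclic distance greater
than `γ`, for some `1 ≤ γ < N/2`. -/
theorem small_set_has_valid_clustering (N : ℕ) (hN : 3 ≤ N) (K : Finset (ZMod N))
    (hK : (K.card : ℝ) < Real.log (N / 2)) :
    ∃ γ : ℕ, 1 ≤ γ ∧ 2 * γ < N ∧
      ∃ P : Finset (Finset (ZMod N)),
        K = P.biUnion id ∧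
        (∀ C ∈ P, ∀ C' ∈ P, C ≠ C' → Disjoint C C') ∧
        (∀ C ∈ P, HasInDiamLE N γ C) ∧
        (∀ C ∈ P, ∀ C' ∈ P, C ≠ C' → ∀ k ∈ C, ∀ k' ∈ C', γ < cycDist N k k') := by
  have hpow : (2 : ℝ) ^ #K < N / 2 := two_pow_lt_of_natCast_lt_log (by positivity) hK
  exact small_set_has_valid_clustering_general N hN K (by
    exact_mod_cast hpow.trans_le (half_le_self (Nat.cast_nonneg N)))
end
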